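/- Let H be a finite-dimensional odd-dimensional quasitriangular Hopf algebra (H, R) over an algebraically closed field of characteristic 0. Then H is semisimple if and only if the Hopf subalgebra H_l = {(f ⊗ id)(R) : f ∈ H*} is semisimple. -/

import Mathlib

open TensorProduct

namespace HS
open Coalgebra HopfAlgebra

section A
variable {k H : Type} [Field k] [Ring H] [HopfAlgebra k H]

theorem exists_sweedler (k H : Type) [Field k] [Ring H] [HopfAlgebra k H] [FiniteDimensional k H] :
    ∃ (n : ℕ) (D : Fin n → H →ₗ[k] H) (e : Fin n → H),
      ∀ x : H, comul (R := k) x = ∑ i, D i x ⊗ₜ[k] e i := by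
  let b := Module.finBasis k H
  refine ⟨_, fun i => (TensorProduct.rid k H).toLinearMap ∘ₗ
    (LinearMap.lTensor H (b.coord i)) ∘ₗ comul (R := k), b, fun x => ?_⟩
  have key : ∀ X : H ⊗[k] H, X = ∑ i, (TensorProduct.rid k H
      ((LinearMap.lTensor H (b.coord i)) X)) ⊗ₜ[k] b i := by
    intro X
    induction X with
    | zero => simp
    | tmul x y =>
      simp only [LinearMap.lTensor_tmul, TensorProduct.rid_tmul, TensorProduct.smul_tmul]
      rw [← TensorProduct.tmul_sum]
      congr 1
      exact (b.sum_repr y).symm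
    | add x y hx hy =>
      conv_lhs => rw [hx, hy]
      simp [TensorProduct.add_tmul, Finset.sum_add_distrib]
  exact key _

section sw
variable {n : ℕ} {D : Fin n → H →ₗ[k] H} {e : Fin n → H}
  (hD : ∀ x : H, comul (R := k) x = ∑ i, D i x ⊗ₜ[k] e i)
include hD

theorem sw_coassoc {M : Type} [AddCommGroup M] [Module k M] (T : H ⊗[k] (H ⊗[k] H) →ₗ[k] M) (x : H) :
    ∑ i, ∑ j, T (D j (D i x) ⊗ₜ (e j ⊗ₜ e i)) = ∑ i, ∑ j, T (D i x ⊗ₜ (D j (e i) ⊗ₜ e j)) := by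
  have := congrArg T (coassoc_apply (R := k) x)
  simpa [hD, TensorProduct.sum_tmul, TensorProduct.tmul_sum] using this

theorem sw_counit_left (x : H) : ∑ i, counit (R := k) (D i x) • e i = x := by
  have := congrArg (TensorProduct.lid k H) (rTensor_counit_comul (R := k) x)
  simpa [hD] using this

theorem sw_counit_right (x : H) : ∑ i, counit (R := k) (e i) • D i x = x := by
  have := congrArg (TensorProduct.rid k H) (lTensor_counit_comul (R := k) x)
  simpa [hD] using this

theorem sw_anti_left (x : H) : ∑ i, antipode k (D i x) * e i = counit (R := k) x • 1 := by
  have := mul_antipode_rTensor_comul_apply (R := k) x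
  simpa [hD, Algebra.smul_def] using this

theorem sw_anti_right (x : H) : ∑ i, D i x * antipode k (e i) = counit (R := k) x • 1 := by
  have := mul_antipode_lTensor_comul_apply (R := k) x
  simpa [hD, Algebra.smul_def] using this

end sw

/-- `a ⊗ b ↦ a₁ ⊗ a₂ b` -/
noncomputable def Phi (k H : Type) [Field k] [Ring H] [HopfAlgebra k H] :
    H ⊗[k] H →ₗ[k] H ⊗[k] H :=
  (LinearMap.lTensor H (LinearMap.mul' k H)) ∘ₗ (TensorProduct.assoc k H H H).toLinearMap ∘ₗ
    (LinearMap.rTensor H (comul (R := k)))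

/-- `a ⊗ b ↦ a₁ ⊗ S(a₂) b` -/
noncomputable def Psi (k H : Type) [Field k] [Ring H] [HopfAlgebra k H] :
    H ⊗[k] H →ₗ[k] H ⊗[k] H :=
  (LinearMap.lTensor H (LinearMap.mul' k H ∘ₗ LinearMap.rTensor H (antipode k))) ∘ₗ
    (TensorProduct.assoc k H H H).toLinearMap ∘ₗ
    (LinearMap.rTensor H (comul (R := k)))

section sw
variable {n : ℕ} {D : Fin n → H →ₗ[k] H} {e : Fin n → H}
  (hD : ∀ x : H, comul (R := k) x = ∑ i, D i x ⊗ₜ[k] e i)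
include hD

theorem Phi_apply (a b : H) : Phi k H (a ⊗ₜ b) = ∑ i, D i a ⊗ₜ (e i * b) := by
  simp [Phi, hD, TensorProduct.sum_tmul]

theorem Psi_apply (a b : H) : Psi k H (a ⊗ₜ b) = ∑ i, D i a ⊗ₜ (antipode k (e i) * b) := by
  simp [Psi, hD, TensorProduct.sum_tmul]

theorem Psi_Phi (X : H ⊗[k] H) : Psi k H (Phi k H X) = X := by
  induction X with
  | zero => simp
  | add x y hx hy => simp [hx, hy]
  | tmul a b =>
    rw [Phi_apply hD, map_sum]
    simp only [Psi_apply hD]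
    have := sw_coassoc hD (LinearMap.lTensor H (LinearMap.mulRight k b ∘ₗ LinearMap.mul' k H ∘ₗ
      LinearMap.rTensor H (antipode k))) a
    simp only [LinearMap.lTensor_tmul, LinearMap.comp_apply, LinearMap.rTensor_tmul,
      LinearMap.mul'_apply, LinearMap.mulRight_apply] at this
    simp only [← mul_assoc]
    rw [this]
    simp only [← TensorProduct.tmul_sum, ← Finset.sum_mul, sw_anti_left hD]
    simp only [smul_mul_assoc, one_mul, TensorProduct.tmul_smul]
    simp only [TensorProduct.smul_tmul', ← TensorProduct.sum_tmul]
    rw [ sw_counit_right hD]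

theorem Phi_Psi (X : H ⊗[k] H) : Phi k H (Psi k H X) = X := by
  induction X with
  | zero => simp
  | add x y hx hy => simp [hx, hy]
  | tmul a b =>
    rw [Psi_apply hD, map_sum]
    simp only [Phi_apply hD]
    have := sw_coassoc hD (LinearMap.lTensor H (LinearMap.mulRight k b ∘ₗ LinearMap.mul' k H ∘ₗ
      LinearMap.lTensor H (antipode k))) a
    simp only [LinearMap.lTensor_tmul, LinearMap.comp_apply,
      LinearMap.mul'_apply, LinearMap.mulRight_apply] at this
    simp only [← mul_assoc]
    rw [this]
    simp only [← TensorProduct.tmul_sum, ← Finset.sum_mul, sw_anti_right hD]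
    simp only [smul_mul_assoc, one_mul, TensorProduct.tmul_smul]
    simp only [TensorProduct.smul_tmul', ← TensorProduct.sum_tmul]
    rw [ sw_counit_right hD]

omit hD in
theorem Phi_mul (h : H) (X : H ⊗[k] H) :
    Phi k H ((h ⊗ₜ 1) * X) = comul (R := k) h * Phi k H X := by
  have h0 : ∀ a b : H, Phi k H (a ⊗ₜ b) = comul (R := k) a * (1 ⊗ₜ b) := by
    intro a b
    simp only [Phi, LinearMap.comp_apply, LinearMap.rTensor_tmul]
    induction comul (R := k) a with
    | zero => simp
    | add x y hx hy => simp only [TensorProduct.add_tmul, map_add, hx, hy, add_mul]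
    | tmul x y => simp
  induction X with
  | zero => simp
  | add x y hx hy => simp [mul_add, hx, hy]
  | tmul a b => simp [h0, mul_assoc]

theorem Psi_mul (h : H) (X : H ⊗[k] H) :
    Psi k H (comul (R := k) h * X) = (h ⊗ₜ 1) * Psi k H X := by
  rw [← Psi_Phi hD ((h ⊗ₜ 1) * Psi k H X), Phi_mul, Phi_Psi hD]

/-- comultiplication of the antipode -/
theorem comul_antipode (x : H) : comul (R := k) (antipode k x) =
    ∑ i, antipode k (e i) ⊗ₜ[k] antipode k (D i x) := by
  let G : H →ₗ[k] H ⊗[k] H := (TensorProduct.map (antipode k) (antipode k)) ∘ₗ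
    (TensorProduct.comm k H H).toLinearMap ∘ₗ comul (R := k)
  have hG : ∀ y, G y = ∑ i, antipode k (e i) ⊗ₜ[k] antipode k (D i y) := by
    intro y; simp [G, hD]
  -- right inverse
  have hr : ∀ y, ∑ i, comul (R := k) (D i y) * comul (R := k) (antipode k (e i)) =
      counit (R := k) y • (1 : H ⊗[k] H) := by
    intro y
    have := congrArg (comul (R := k)) (sw_anti_right hD y)
    simpa [Algebra.TensorProduct.one_def] using this
  -- left inverse
  have hl : ∀ y, ∑ i, G (D i y) * comul (R := k) (e i) = counit (R := k) y • (1 : H ⊗[k] H) := by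
    intro y
    have e1 : ∀ z, ∑ i, ∑ j, (antipode k (D i z) * D j (e i)) ⊗ₜ[k] e j = (1 : H) ⊗ₜ[k] z := by
      intro z
      have := sw_coassoc hD ((LinearMap.rTensor H (LinearMap.mul' k H ∘ₗ
        LinearMap.rTensor H (antipode k))) ∘ₗ (TensorProduct.assoc k H H H).symm.toLinearMap) z
      simp only [LinearMap.comp_apply, LinearEquiv.coe_coe, TensorProduct.assoc_symm_tmul,
        LinearMap.rTensor_tmul, LinearMap.mul'_apply] at this
      rw [← this]
      simp only [← TensorProduct.sum_tmul, sw_anti_left hD, TensorProduct.smul_tmul]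
      rw [← TensorProduct.tmul_sum, sw_counit_left hD]
    have e2 := sw_coassoc hD ((LinearMap.mul' k (H ⊗[k] H)) ∘ₗ
      (TensorProduct.map (TensorProduct.mk k H H 1 ∘ₗ antipode k)
        ((LinearMap.mul' k (H ⊗[k] H)) ∘ₗ TensorProduct.map
          ((TensorProduct.mk k H H).flip 1 ∘ₗ antipode k) (comul (R := k))))) y
    simp only [LinearMap.comp_apply, TensorProduct.map_tmul, TensorProduct.mk_apply,
      LinearMap.flip_apply, LinearMap.mul'_apply] at e2
    have e3 : ∀ i, G (D i y) * comul (R := k) (e i) = ∑ j, (1 ⊗ₜ antipode k (D j (D i y))) *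
        ((antipode k (e j) ⊗ₜ[k] 1) * comul (R := k) (e i)) := by
      intro i
      rw [hG, Finset.sum_mul]
      refine Finset.sum_congr rfl fun j _ => ?_
      rw [← mul_assoc]; simp
    simp only [e3, e2]
    have e4 : ∀ i, ∑ j, (1 ⊗ₜ antipode k (D i y)) * ((antipode k (D j (e i)) ⊗ₜ[k] 1) *
        comul (R := k) (e j)) = (1 : H) ⊗ₜ[k] (antipode k (D i y) * e i) := by
      intro i
      rw [← Finset.mul_sum]
      have : ∑ j, ((antipode k (D j (e i)) ⊗ₜ[k] 1) * comul (R := k) (e j)) = (1 : H) ⊗ₜ[k] e i := by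
        rw [← e1]
        simp [hD, Finset.mul_sum]
      rw [this]; simp
    simp only [e4, ← TensorProduct.tmul_sum, sw_anti_left hD]
    simp [Algebra.TensorProduct.one_def]
  rw [← hG]
  have e5 := sw_coassoc hD ((LinearMap.mul' k (H ⊗[k] H)) ∘ₗ (TensorProduct.map G
    ((LinearMap.mul' k (H ⊗[k] H)) ∘ₗ TensorProduct.map (comul (R := k))
      (comul (R := k) ∘ₗ antipode k)))) x
  simp only [LinearMap.comp_apply, TensorProduct.map_tmul, LinearMap.mul'_apply] at e5
  simp only [← Finset.mul_sum, hr] at e5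
  simp only [← mul_assoc, ← Finset.sum_mul, hl] at e5
  simp only [smul_mul_assoc, mul_smul_comm, mul_one, one_mul] at e5
  have e6 := congrArg G (sw_counit_right hD x)
  have e7 := congrArg (comul (R := k) ∘ₗ antipode k) (sw_counit_left hD x)
  simp only [map_sum, map_smul, LinearMap.comp_apply] at e6 e7
  rw [← e6, ← e7, e5]

end sw
end A
end HS

namespace HS
open Coalgebra HopfAlgebra

section B
variable {k H : Type} [Field k] [Ring H] [HopfAlgebra k H] [FiniteDimensional k H]

theorem pTr_aux {n m : ℕ} (A : Fin n → H →ₗ[k] H) (c : Fin n → H) (A' : Fin m → H →ₗ[k] H)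
    (c' : Fin m → H) (h : ∀ x, ∑ i, A i x ⊗ₜ[k] c i = ∑ i, A' i x ⊗ₜ[k] c' i) :
    ∑ i, A i (c i) = ∑ i, A' i (c' i) := by
  let b := Module.finBasis k H
  have key : ∀ {n : ℕ} (A : Fin n → H →ₗ[k] H) (c : Fin n → H),
      ∑ l, TensorProduct.rid k H (LinearMap.lTensor H (b.coord l) (∑ i, A i (b l) ⊗ₜ[k] c i)) =
      ∑ i, A i (c i) := by
    intro n A c
    simp only [map_sum, LinearMap.lTensor_tmul, TensorProduct.rid_tmul]
    rw [Finset.sum_comm]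
    refine Finset.sum_congr rfl fun i _ => ?_
    conv_rhs => rw [← b.sum_repr (c i), map_sum]
    simp
  rw [← key, ← key]
  simp only [h]

theorem trace_aux {ι : Type} [Fintype ι] (f : ι → H →ₗ[k] k) (c : ι → H) (T : H →ₗ[k] H)
    (h : ∀ x, T x = ∑ i, f i x • c i) : LinearMap.trace k H T = ∑ i, f i (c i) := by
  have : T = ∑ i, (f i).smulRight (c i) := by
    ext x; simp [h]
  rw [this, map_sum]
  simp

section sw
variable {n : ℕ} {D : Fin n → H →ₗ[k] H} {e : Fin n → H}
  (hD : ∀ x : H, comul (R := k) x = ∑ i, D i x ⊗ₜ[k] e i)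
include hD

theorem LT_integral (h : H) : h * (∑ j, D j (antipode k (antipode k (e j)))) =
    counit (R := k) h • (∑ j, D j (antipode k (antipode k (e j)))) := by
  have key : ∀ x, ∑ j, (h * D j x) ⊗ₜ[k] antipode k (antipode k (e j)) =
      ∑ i, ∑ j, D j (D i h * x) ⊗ₜ[k] (antipode k (e i) * antipode k (antipode k (e j))) := by
    intro x
    have e1 := Psi_mul hD h (x ⊗ₜ 1)
    have e2 := congrArg (LinearMap.lTensor H (antipode k)) e1
    rw [hD h, Finset.sum_mul, map_sum, map_sum] at e2
    simp only [Algebra.TensorProduct.tmul_mul_tmul, mul_one, Psi_apply hD, Finset.mul_sum,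
      one_mul, map_sum, LinearMap.lTensor_tmul, HopfAlgebra.antipode_mul_antidistrib] at e2
    exact e2.symm
  have k2 := pTr_aux (m := n * n) (fun j => LinearMap.mulLeft k h ∘ₗ D j)
    (fun j => antipode k (antipode k (e j)))
    (fun q => D (finProdFinEquiv.symm q).2 ∘ₗ LinearMap.mulLeft k (D (finProdFinEquiv.symm q).1 h))
    (fun q => antipode k (e (finProdFinEquiv.symm q).1) *
      antipode k (antipode k (e (finProdFinEquiv.symm q).2))) (by
      intro x
      simp only [LinearMap.comp_apply, LinearMap.mulLeft_apply, key]
      rw [← finProdFinEquiv.sum_comp]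
      simp only [Equiv.symm_apply_apply, Fintype.sum_prod_type])
  rw [← finProdFinEquiv.sum_comp] at k2
  simp only [Equiv.symm_apply_apply, Fintype.sum_prod_type, LinearMap.comp_apply,
    LinearMap.mulLeft_apply] at k2
  rw [Finset.mul_sum, k2, Finset.sum_comm, Finset.smul_sum]
  refine Finset.sum_congr rfl fun j _ => ?_
  rw [← map_sum]
  simp only [← mul_assoc, ← Finset.sum_mul, sw_anti_right hD]
  simp

theorem LT_counit : counit (R := k) (∑ j, D j (antipode k (antipode k (e j)))) =
    LinearMap.trace k H (antipode k ∘ₗ antipode k) := by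
  rw [trace_aux (fun i => counit (R := k) ∘ₗ D i) (fun i => antipode k (antipode k (e i)))]
  · simp
  · intro x
    conv_lhs => rw [← sw_counit_left hD x]
    simp

theorem LT_func (χ : H →ₗ[k] k) (T : H →ₗ[k] H)
    (hT : ∀ x, T x = ∑ i, χ (D i x) • antipode k (antipode k (e i))) :
    χ (∑ j, D j (antipode k (antipode k (e j)))) = LinearMap.trace k H T := by
  rw [trace_aux (fun i => χ ∘ₗ D i) (fun i => antipode k (antipode k (e i))) T hT]
  simp

omit [FiniteDimensional k H] in
theorem semisimple_of_integral (L : H) (hL : ∀ h, h * L = counit (R := k) h • L)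
    (hL0 : counit (R := k) L ≠ 0) : IsSemisimpleRing H := by
  have hc : ∀ h : H, ∑ j, (h * D j L) ⊗ₜ[k] antipode k (e j) =
      ∑ j, D j L ⊗ₜ[k] (antipode k (e j) * h) := by
    intro h
    have e1 := Psi_mul hD h (L ⊗ₜ 1)
    rw [Psi_apply hD] at e1
    simp only [mul_one, Finset.mul_sum, Algebra.TensorProduct.tmul_mul_tmul, one_mul] at e1
    rw [← e1, ← Psi_apply hD, hD h, Finset.sum_mul]
    simp only [Algebra.TensorProduct.tmul_mul_tmul, hL, mul_one, TensorProduct.smul_tmul,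
      ← TensorProduct.tmul_sum, sw_counit_left hD]
  have hc2 : ∑ j, D j L * antipode k (e j) = counit (R := k) L • 1 := sw_anti_right hD L
  suffices h : ComplementedLattice (Submodule H H) from { toComplementedLattice := h }
  refine ⟨fun N => ?_⟩
  obtain ⟨p, hp⟩ := LinearMap.exists_leftInverse_of_injective (K := k)
    ((N.restrictScalars k).subtype) (by simp)
  have hp' : ∀ x : H, (hx : x ∈ N) → ((p x : N.restrictScalars k) : H) = x := by
    intro x hx
    have := LinearMap.congr_fun hp ⟨x, hx⟩
    simpa using congrArg Subtype.val this
  let q : H →ₗ[k] H := (N.restrictScalars k).subtype ∘ₗ p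
  have hqN : ∀ x, q x ∈ N := fun x => (p x).2
  let P : H →ₗ[H] N :=
    { toFun := fun x => ⟨∑ j, ((counit (R := k) L)⁻¹ • D j L) * q (antipode k (e j) * x),
        N.sum_mem fun j _ => N.smul_mem _ (hqN _)⟩
      map_add' := by
        intro x y; ext; simp [mul_add, Finset.sum_add_distrib]
      map_smul' := by
        intro h x; ext
        have := congrArg ((LinearMap.mul' k H) ∘ₗ LinearMap.lTensor H (q ∘ₗ LinearMap.mulRight k x))
          (hc h)
        simp only [map_sum, LinearMap.comp_apply, LinearMap.lTensor_tmul, LinearMap.mul'_apply,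
          LinearMap.mulRight_apply] at this
        simp only [smul_eq_mul, RingHom.id_apply, Submodule.coe_smul, smul_mul_assoc,
          ← Finset.smul_sum, mul_smul_comm, Finset.mul_sum, ← mul_assoc, this] }
  have hP : ∀ x : N, P x = x := by
    intro x; ext
    have h1 : ∀ j, q (antipode k (e j) * x) = antipode k (e j) * x :=
      fun j => hp' _ (N.smul_mem _ x.2)
    change ∑ j, ((counit (R := k) L)⁻¹ • D j L) * q (antipode k (e j) * x) = x
    simp only [h1, ← mul_assoc, ← Finset.sum_mul, smul_mul_assoc, ← Finset.smul_sum, hc2]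
    simp [hL0]
  exact ⟨_, LinearMap.isCompl_of_proj hP⟩

end sw

theorem T1 (h : LinearMap.trace k H (antipode k ∘ₗ antipode k) ≠ 0) : IsSemisimpleRing H := by
  obtain ⟨n, D, e, hD⟩ := exists_sweedler k H
  exact semisimple_of_integral hD _ (LT_integral hD) (by rwa [LT_counit hD])

end B
end HS

namespace HS

section C
open Module

theorem eig_decomp {k V : Type} [Field k] [IsAlgClosed k] [CharZero k] [AddCommGroup V] [Module k V]
    [FiniteDimensional k V] (T : Module.End k V) (N : ℕ) [NeZero N] (hT : T ^ N = 1)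
    (ζ : k) (hζ : IsPrimitiveRoot ζ N) :
    ∃ m : Fin N → ℕ,
      (∀ j : ℕ, LinearMap.trace k V (T ^ j) = ∑ i, (m i : k) * (ζ ^ (i : ℕ)) ^ j) ∧
      (∑ i, m i = finrank k V) ∧
      ((∃ v, v ≠ 0 ∧ T v = v) → m 0 ≠ 0) ∧
      ((∀ i, i ≠ 0 → m i = 0) → T = 1) := by
  classical
  have hss : T.IsSemisimple := by
    refine Module.End.isSemisimple_of_squarefree_aeval_eq_zero (p := Polynomial.X ^ N - 1) ?_ ?_
    · exact (Polynomial.X_pow_sub_one_separable_iff.mpr (by exact_mod_cast NeZero.ne N)).squarefree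
    · simp [hT]
  let E : Fin N → Submodule k V := fun i => T.eigenspace (ζ ^ (i : ℕ))
  have hinj : Function.Injective (fun i : Fin N => ζ ^ (i : ℕ)) := by
    intro i j hij
    exact Fin.ext (hζ.pow_inj i.2 j.2 hij)
  have hind : iSupIndep E := T.eigenspaces_iSupIndep.comp hinj
  have htop : ⨆ i, E i = ⊤ := by
    rw [eq_top_iff, ← T.iSup_maxGenEigenspace_eq_top]
    refine iSup_le fun μ => ?_
    rw [hss.isFinitelySemisimple.maxGenEigenspace_eq_eigenspace]
    by_cases h : T.eigenspace μ = ⊥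
    · rw [h]; exact bot_le
    · obtain ⟨v, hv, hv0⟩ := Submodule.exists_mem_ne_zero_of_ne_bot h
      rw [Module.End.mem_eigenspace_iff] at hv
      have hpow : ∀ j : ℕ, (T ^ j) v = μ ^ j • v := by
        intro j
        induction j with
        | zero => simp
        | succ j ih => rw [pow_succ', Module.End.mul_apply, ih, map_smul, hv, smul_smul, pow_succ]
      have h1 : μ ^ N = 1 := by
        have := hpow N
        rw [hT, Module.End.one_apply] at this
        have h2 : (μ ^ N - 1) • v = 0 := by rw [sub_smul, ← this, one_smul, sub_self]
        rcases smul_eq_zero.mp h2 with h3 | h3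
        · exact sub_eq_zero.mp h3
        · exact absurd h3 hv0
      obtain ⟨i, hi, rfl⟩ := hζ.eq_pow_of_pow_eq_one h1
      exact le_iSup E ⟨i, hi⟩
  have hintg := DirectSum.isInternal_submodule_of_iSupIndep_of_iSup_eq_top hind htop
  have hpow : ∀ (i : Fin N) (j : ℕ) (v : V), v ∈ E i → (T ^ j) v = (ζ ^ (i : ℕ)) ^ j • v := by
    intro i j v hv
    have hv := Module.End.mem_eigenspace_iff.mp hv
    induction j with
    | zero => simp
    | succ j ih => rw [pow_succ', Module.End.mul_apply, ih, map_smul, hv, smul_smul, pow_succ]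
  have htr : ∀ j : ℕ, LinearMap.trace k V (T ^ j) =
      ∑ i, ((finrank k (E i) : ℕ) : k) * (ζ ^ (i : ℕ)) ^ j := by
    intro j
    have hm : ∀ i, Set.MapsTo (T ^ j) (E i) (E i) := by
      intro i v hv
      rw [hpow i j v hv]
      exact (E i).smul_mem _ hv
    rw [LinearMap.trace_eq_sum_trace_restrict hintg hm]
    refine Finset.sum_congr rfl fun i _ => ?_
    have : (T ^ j).restrict (hm i) = (ζ ^ (i : ℕ)) ^ j • LinearMap.id := by
      ext v
      exact hpow i j v v.2
    rw [this, map_smul, LinearMap.trace_id, smul_eq_mul, mul_comm]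
  refine ⟨fun i => finrank k (E i), htr, ?_, ?_, ?_⟩
  · have := htr 0
    simp only [pow_zero, mul_one, LinearMap.trace_one] at this
    exact_mod_cast this.symm
  · rintro ⟨v, hv0, hv⟩ h0
    have : E 0 = ⊥ := Submodule.finrank_eq_zero.mp h0
    have hvE : v ∈ E 0 := by
      simp only [E, Module.End.mem_eigenspace_iff]
      simp [hv]
    rw [this] at hvE
    exact hv0 (by simpa using hvE)
  · intro h
    have h0 : E 0 = ⊤ := by
      rw [eq_top_iff, ← htop]
      refine iSup_le fun i => ?_
      by_cases hi : i = 0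
      · rw [hi]
      · rw [Submodule.finrank_eq_zero.mp (h i hi)]; exact bot_le
    ext v
    have : v ∈ E 0 := by rw [h0]; trivial
    have := Module.End.mem_eigenspace_iff.mp this
    simpa using this

/-- trace of `x ↦ a x b` on `End V` -/
theorem trace_conj_end {k V : Type} [Field k] [AddCommGroup V] [Module k V]
    [FiniteDimensional k V] (a b : Module.End k V) (F : Module.End k (Module.End k V))
    (hF : ∀ x, F x = a * x * b) :
    LinearMap.trace k _ F = LinearMap.trace k V a * LinearMap.trace k V b := by
  have h : F = (dualTensorHomEquiv k V V).conj
      (TensorProduct.map (Module.Dual.transpose (R := k) b) a) := by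
    apply LinearMap.ext
    intro x
    obtain ⟨y, rfl⟩ := (dualTensorHomEquiv k V V).surjective x
    rw [LinearEquiv.conj_apply_apply, LinearEquiv.symm_apply_apply, hF]
    induction y with
    | zero => simp
    | add x y hx hy => simp only [map_add, mul_add, add_mul, hx, hy]
    | tmul f v =>
      ext w
      simp [dualTensorHomEquiv, Module.End.mul_apply]
      rfl
  have h2 := LinearMap.trace_conj' (R := k) (M := Module.Dual k V ⊗[k] V) (N := V →ₗ[k] V) (TensorProduct.map (Module.Dual.transpose (R := k) b) a)
    (dualTensorHomEquiv k V V)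
  rw [h]
  refine h2.trans ?_
  rw [LinearMap.trace_tensorProduct', LinearMap.trace_transpose', mul_comm]

end C
end HS

namespace HS

section D
open Module

theorem conj_root {N : ℕ} [NeZero N] {x : ℂ} (hx : x ^ N = 1) : x ^ (N - 1) = (starRingEnd ℂ) x := by
  have hn : ‖x‖ = 1 := Complex.norm_eq_one_of_pow_eq_one hx (NeZero.ne N)
  have h1 : x * (starRingEnd ℂ) x = 1 := by
    rw [Complex.mul_conj, Complex.normSq_eq_norm_sq, hn]; simp
  have h2 : x * x ^ (N - 1) = 1 := by
    rw [← pow_succ', Nat.sub_add_cancel (NeZero.one_le), hx]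
  have hx0 : x ≠ 0 := by rintro rfl; simp at h1
  exact mul_left_cancel₀ hx0 (h2.trans h1.symm)

theorem block_pos {k V L : Type} [Field k] [IsAlgClosed k] [CharZero k] [AddCommGroup V] [Module k V]
    [FiniteDimensional k V] [Field L] (N : ℕ) [NeZero N] (ι : L →+* k) (z : L)
    (hz : IsPrimitiveRoot z N) (φ : L →+* ℂ)
    (θ : Module.End k V ≃ₐ[k] Module.End k V) (hθ : (θ.toLinearMap : Module.End k (Module.End k V)) ^ N = 1) :
    ∃ y : L, ι y = LinearMap.trace k _ θ.toLinearMap ∧ ∃ r : ℝ, 0 ≤ r ∧ φ y = r := by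
  obtain ⟨T0, hT0⟩ := AlgEquiv.eq_linearEquivConjAlgEquiv θ
  let T : Module.End k V := T0.toLinearMap
  have hT : ∀ x, θ x * T = T * x := by
    intro x
    ext v
    simp [hT0, T]
  have hTj : ∀ j x, ((θ.toLinearMap : Module.End k (Module.End k V)) ^ j) x * T ^ j = T ^ j * x := by
    intro j
    induction j with
    | zero => intro x; simp
    | succ j ih =>
      intro x
      rw [pow_succ, pow_succ, Module.End.mul_apply, ← mul_assoc, ih, mul_assoc, mul_assoc]
      congr 1
      exact hT x
  have hcen : ∀ x, x * T ^ N = T ^ N * x := by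
    intro x
    have := hTj N x
    rwa [hθ, Module.End.one_apply] at this
  have hTu : IsUnit T := (Module.End.isUnit_iff T).mpr T0.bijective
  obtain ⟨c, hc⟩ : ∃ c : k, T ^ N = algebraMap k _ c := by
    have h1 : T ^ N ∈ Subalgebra.center k (Module.End k V) := by
      rw [Subalgebra.mem_center_iff]; exact hcen
    rw [Algebra.IsCentral.center_eq_bot, Algebra.mem_bot] at h1
    obtain ⟨c, hc⟩ := h1
    exact ⟨c, hc.symm⟩
  obtain ⟨U, hU, hUN⟩ : ∃ U : Module.End k V, (∀ x, θ x * U = U * x) ∧ U ^ N = 1 := by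
    rcases subsingleton_or_nontrivial V with hV | hV
    · exact ⟨T, hT, Subsingleton.elim _ _⟩
    have hc0 : c ≠ 0 := by
      rintro rfl
      rw [map_zero] at hc
      exact (hTu.pow N).ne_zero hc
    obtain ⟨s, hs⟩ := IsAlgClosed.exists_pow_nat_eq (c⁻¹) (NeZero.pos N)
    refine ⟨s • T, fun x => ?_, ?_⟩
    · rw [mul_smul_comm, smul_mul_assoc, hT]
    · rw [smul_pow, hc, hs, Algebra.algebraMap_eq_smul_one, smul_smul, inv_mul_cancel₀ hc0, one_smul]
  have hk : IsPrimitiveRoot (ι z) N := hz.map_of_injective ι.injective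
  obtain ⟨m, hm, -⟩ := eig_decomp U N hUN (ι z) hk
  have hUinv : U * U ^ (N - 1) = 1 := by
    rw [← pow_succ', Nat.sub_add_cancel (NeZero.one_le), hUN]
  have htr := trace_conj_end U (U ^ (N - 1)) θ.toLinearMap (by
    intro x
    rw [← hU x, mul_assoc, hUinv, mul_one]; rfl)
  have hm1 := hm 1
  rw [pow_one] at hm1
  rw [hm1, hm (N - 1)] at htr
  refine ⟨(∑ i, (m i : L) * (z ^ (i : ℕ)) ^ 1) * (∑ i, (m i : L) * (z ^ (i : ℕ)) ^ (N - 1)), ?_, ?_⟩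
  · rw [htr]; simp
  · refine ⟨Complex.normSq (∑ i, (m i : ℂ) * (φ z ^ (i : ℕ))), Complex.normSq_nonneg _, ?_⟩
    rw [← Complex.mul_conj]
    simp only [map_mul, map_sum, map_natCast, map_pow, pow_one]
    congr 1
    refine Finset.sum_congr rfl fun i _ => ?_
    congr 1
    rw [conj_root, map_pow]
    rw [← pow_mul, mul_comm, pow_mul, ← map_pow, hz.pow_eq_one]; simp

theorem sum_rigid {L : Type} [Field L] [NumberField L] (N : ℕ) [NeZero N] (z : L)
    (hz : IsPrimitiveRoot z N) (m : Fin N → ℕ) (n : ℕ) (hn : ∑ i, m i = n) (hn0 : n ≠ 0)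
    (hm0 : m 0 ≠ 0)
    (α : L) (hα : (n : L) * α = ∑ i, (m i : L) * z ^ (i : ℕ)) (hα0 : α ≠ 0)
    (hintg : IsIntegral ℤ α) : ∀ i, i ≠ 0 → m i = 0 := by
  have hz1 : ∀ (φ : L →+* ℂ) (i : Fin N), ‖φ (z ^ (i : ℕ))‖ = 1 := by
    intro φ i
    refine Complex.norm_eq_one_of_pow_eq_one (n := N) ?_ (NeZero.ne N)
    rw [← map_pow, ← pow_mul, mul_comm, pow_mul, hz.pow_eq_one]; simp
  have hle : ∀ φ : L →+* ℂ, ‖φ α‖ ≤ 1 := by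
    intro φ
    have h1 := congrArg (fun t => ‖φ t‖) hα
    simp only [map_mul, map_natCast, map_sum, norm_mul, Complex.norm_natCast] at h1
    have h2 : ‖∑ i, (m i : ℂ) * φ (z ^ (i : ℕ))‖ ≤ n := by
      refine (norm_sum_le _ _).trans ?_
      simp only [norm_mul, hz1, Complex.norm_natCast, mul_one]
      rw [← hn]; push_cast; exact le_rfl
    have hn' : (0 : ℝ) < n := by exact_mod_cast Nat.pos_of_ne_zero hn0
    rw [← h1] at h2
    by_contra hc
    push Not at hc
    nlinarith
  obtain ⟨M, hM0, hM⟩ := NumberField.Embeddings.pow_eq_one_of_norm_le_one L ℂ hα0 hintg hle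
  obtain ⟨φ⟩ : Nonempty (L →+* ℂ) := inferInstance
  have hα1 : ‖φ α‖ = 1 := by
    refine Complex.norm_eq_one_of_pow_eq_one (n := M) ?_ hM0.ne'
    rw [← map_pow, hM, map_one]
  -- multiply by the conjugate
  set w : ℂ := (starRingEnd ℂ) (φ α) with hw
  have hww : φ α * w = 1 := by
    rw [hw, Complex.mul_conj, Complex.normSq_eq_norm_sq, hα1]; simp
  have hw1 : ‖w‖ = 1 := by rw [hw, RCLike.norm_conj, hα1]
  have h1 : (n : ℂ) = ∑ i, (m i : ℂ) * (φ (z ^ (i : ℕ)) * w) := by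
    have := congrArg (fun t => φ t * w) hα
    simp only [map_mul, map_natCast, map_sum, mul_assoc, hww, Finset.sum_mul, mul_one] at this
    exact this
  have h2 : ∑ i, (m i : ℝ) * (1 - (φ (z ^ (i : ℕ)) * w).re) = 0 := by
    have := congrArg Complex.re h1
    simp only [Complex.natCast_re, Complex.re_sum] at this
    have h3 : ∀ i, ((m i : ℂ) * (φ (z ^ (i : ℕ)) * w)).re = (m i : ℝ) * (φ (z ^ (i : ℕ)) * w).re := by
      intro i
      rw [← Complex.ofReal_natCast, Complex.re_ofReal_mul]
    simp only [h3] at this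
    simp only [mul_sub, mul_one, Finset.sum_sub_distrib, ← this]
    rw [← hn]; push_cast; simp
  have hnorm : ∀ i : Fin N, ‖φ (z ^ (i : ℕ)) * w‖ = 1 := by
    intro i; rw [norm_mul, hz1, hw1, one_mul]
  have hre : ∀ i : Fin N, (φ (z ^ (i : ℕ)) * w).re ≤ 1 := fun i =>
    (Complex.re_le_norm _).trans (hnorm i).le
  have h4 : ∀ i, (m i : ℝ) * (1 - (φ (z ^ (i : ℕ)) * w).re) = 0 := by
    intro i
    exact (Finset.sum_eq_zero_iff_of_nonneg (fun i _ => mul_nonneg (Nat.cast_nonneg _)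
      (sub_nonneg.mpr (hre i)))).mp h2 i (Finset.mem_univ i)
  have h5 : ∀ i, m i ≠ 0 → φ (z ^ (i : ℕ)) * w = 1 := by
    intro i hi
    have h6 : (φ (z ^ (i : ℕ)) * w).re = 1 := by
      rcases mul_eq_zero.mp (h4 i) with h | h
      · exact absurd (by exact_mod_cast h) hi
      · linarith
    have h7 := hnorm i
    have h8 := Complex.sq_norm (φ (z ^ (i : ℕ)) * w)
    rw [h7, Complex.normSq_apply, h6] at h8
    have h9 : (φ (z ^ (i : ℕ)) * w).im = 0 := by nlinarith
    exact Complex.ext (by simpa using h6) (by simpa using h9)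
  have hw' : w = 1 := by simpa using h5 0 hm0
  intro i hi
  by_contra hmi
  have := h5 i hmi
  rw [hw', mul_one] at this
  have h10 : z ^ (i : ℕ) = z ^ 0 := φ.injective (by simpa using this)
  exact hi (Fin.ext (hz.pow_inj i.2 (NeZero.pos N) h10))

theorem trace_integral {k V : Type} [Field k] [IsAlgClosed k] [AddCommGroup V] [Module k V]
    [FiniteDimensional k V] (M : Module.End k V) (N : ℕ) [NeZero N] (hM : M ^ (N + 1) = M) :
    IsIntegral ℤ (LinearMap.trace k V M) := by
  rw [Module.End.trace_eq_sum_roots_charpoly_of_splits (IsAlgClosed.splits _)]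
  refine IsIntegral.multiset_sum fun μ hμ => ?_
  have hev : M.HasEigenvalue μ := by
    rw [Module.End.hasEigenvalue_iff_isRoot_charpoly]
    exact Polynomial.isRoot_of_mem_roots hμ
  obtain ⟨v, hv⟩ := hev.exists_hasEigenvector
  have h1 := hv.pow_apply (N + 1)
  rw [hM, hv.apply_eq_smul] at h1
  have h2 : μ ^ (N + 1) = μ := smul_left_injective k hv.2 h1.symm
  refine ⟨Polynomial.X ^ (N + 1) - Polynomial.X, ?_, ?_⟩
  · apply Polynomial.monic_X_pow_sub
    rw [Polynomial.degree_X]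
    exact_mod_cast Nat.succ_lt_succ (NeZero.pos N)
  · simp [h2]

end D
end HS

namespace HS

section E
open Module

theorem prod_trace_ne_zero {k L : Type} [Field k] [IsAlgClosed k] [CharZero k]
    [Field L] (N : ℕ) [NeZero N] (ι : L →+* k) (z : L)
    (hz : IsPrimitiveRoot z N) (φ : L →+* ℂ) {n : ℕ} (d : Fin n → ℕ)
    (θ : Module.End k (Π i, Matrix (Fin (d i)) (Fin (d i)) k))
    (hmul : ∀ x y, θ (x * y) = θ x * θ y) (hone : ∀ i, θ (Pi.single i 1) = Pi.single i 1)
    (hN : θ ^ N = 1) (Λ : Π i, Matrix (Fin (d i)) (Fin (d i)) k) (hΛ0 : Λ ≠ 0)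
    (hΛ : ∀ x, ∃ c : k, x * Λ = c • Λ) :
    LinearMap.trace k _ θ ≠ 0 := by
  let B : ∀ i, Module.End k (Matrix (Fin (d i)) (Fin (d i)) k) := fun i =>
    LinearMap.proj i ∘ₗ θ ∘ₗ LinearMap.single k (fun i => Matrix (Fin (d i)) (Fin (d i)) k) i
  have hB : ∀ i X, θ (Pi.single i X) = Pi.single i (B i X) := by
    intro i X
    have h1 : (Pi.single i X : Π i, Matrix (Fin (d i)) (Fin (d i)) k) =
        Pi.single i X * Pi.single i 1 := by
      rw [← Pi.single_mul, mul_one]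
    rw [h1, hmul, hone]
    ext j : 1
    by_cases hj : j = i
    · subst hj; simp [B]
    · simp [hj]
  have htr : LinearMap.trace k _ θ = ∑ i, LinearMap.trace k _ (B i) := by
    have h1 : θ = ∑ i, (θ ∘ₗ LinearMap.single k (fun i => Matrix (Fin (d i)) (Fin (d i)) k) i) ∘ₗ (LinearMap.proj i) := by
      refine LinearMap.ext fun x => ?_
      conv_lhs => rw [← Finset.univ_sum_single x, map_sum]
      simp
    conv_lhs => rw [h1]
    rw [map_sum]
    refine Finset.sum_congr rfl fun i _ => ?_
    rw [LinearMap.trace_comp_comm']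
  have hBmul : ∀ i X Y, B i (X * Y) = B i X * B i Y := by
    intro i X Y
    have := hmul (Pi.single i X) (Pi.single i Y)
    rw [← Pi.single_mul, hB, hB, hB, ← Pi.single_mul] at this
    exact Pi.single_injective i this
  have hB1 : ∀ i, B i 1 = 1 := by
    intro i
    have := hone i
    rw [hB] at this
    exact Pi.single_injective i this
  have hBN : ∀ i, B i ^ N = 1 := by
    intro i
    have : ∀ j X, (θ ^ j) (Pi.single i X) = Pi.single i ((B i ^ j) X) := by
      intro j
      induction j with
      | zero => intro X; simp
      | succ j ih => intro X; rw [pow_succ, pow_succ, Module.End.mul_apply, hB, ih, Module.End.mul_apply]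
    refine LinearMap.ext fun X => ?_
    have h2 := this N X
    rw [hN, Module.End.one_apply] at h2
    exact (Pi.single_injective i h2).symm
  have hpos : ∀ i, ∃ y : L, ι y = LinearMap.trace k _ (B i) ∧ ∃ r : ℝ, 0 ≤ r ∧ φ y = r := by
    intro i
    have hbij : Function.Bijective (B i) := by
      rw [← Module.End.isUnit_iff]
      exact IsUnit.of_pow_eq_one (hBN i) (NeZero.ne N)
    let e := Matrix.toLinAlgEquiv' (R := k) (n := Fin (d i))
    let τ : Matrix (Fin (d i)) (Fin (d i)) k ≃ₐ[k] Matrix (Fin (d i)) (Fin (d i)) k :=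
      AlgEquiv.ofBijective (AlgHom.ofLinearMap (B i) (hB1 i) (hBmul i)) hbij
    let σ := (e.symm.trans τ).trans e
    have hσ : σ.toLinearMap = e.toLinearEquiv.conj (B i) := by
      refine LinearMap.ext fun x => ?_
      simp [σ, τ, LinearEquiv.conj_apply]
      rfl
    have hσN : (σ.toLinearMap : Module.End k _) ^ N = 1 := by
      rw [hσ]
      have := map_pow (e.toLinearEquiv.conjAlgEquiv k) (B i) N
      rw [hBN, map_one] at this
      exact this.symm
    obtain ⟨y, hy, hr⟩ := block_pos N ι z hz φ σ hσN
    refine ⟨y, ?_, hr⟩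
    rw [hy, hσ]
    exact LinearMap.trace_conj' _ _
  choose y hy r hr hφ using hpos
  -- the special block
  obtain ⟨i₀, hi₀⟩ : ∃ i, Λ i ≠ 0 := by
    by_contra hc
    push Not at hc
    exact hΛ0 (funext hc)
  obtain ⟨p, q, hpq⟩ : ∃ p q, Λ i₀ p q ≠ 0 := by
    by_contra hc
    push Not at hc
    exact hi₀ (Matrix.ext hc)
  have hsub : ∀ t : Fin (d i₀), t = p := by
    intro t
    by_contra ht
    obtain ⟨c, hc⟩ := hΛ (Pi.single i₀ (Matrix.single t p 1))
    have h1 := congrFun hc i₀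
    simp only [Pi.mul_apply, Pi.single_eq_same, Pi.smul_apply] at h1
    have h2 := congrFun (congrFun h1 p) q
    have h3 := congrFun (congrFun h1 t) q
    simp [Matrix.single_mul_apply_of_ne _ _ _ _ _ (Ne.symm ht)] at h2 h3
    rcases h2 with h2 | h2
    · rw [h2] at h3; simp at h3; exact hpq h3
    · exact hpq h2
  have hd : d i₀ = 1 := by
    have : Fintype.card (Fin (d i₀)) = 1 := Fintype.card_eq_one_iff.mpr ⟨p, hsub⟩
    simpa using this
  have htr1 : LinearMap.trace k _ (B i₀) = 1 := by
    have : B i₀ = LinearMap.id := by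
      refine LinearMap.ext fun X => ?_
      have hX : X = X p p • 1 := by
        ext s t
        rw [hsub s, hsub t]; simp
      rw [hX, map_smul, hB1]; rfl
    rw [this, LinearMap.trace_id, Module.finrank_matrix]
    simp [hd]
  have hr1 : r i₀ = 1 := by
    have : y i₀ = 1 := ι.injective (by rw [hy, htr1, map_one])
    have h2 := hφ i₀
    rw [this, map_one] at h2
    exact_mod_cast h2.symm
  intro h0
  rw [htr] at h0
  have h1 : ∑ i, y i = 0 := ι.injective (by rw [map_sum, map_zero, ← h0]; exact Finset.sum_congr rfl fun i _ => hy i)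
  have h2 : ∑ i, r i = 0 := by
    have := congrArg φ h1
    rw [map_sum, map_zero] at this
    simp only [hφ] at this
    exact_mod_cast this
  have h3 := (Finset.sum_eq_zero_iff_of_nonneg (fun i _ => hr i)).mp h2 i₀ (Finset.mem_univ _)
  rw [hr1] at h3
  exact one_ne_zero h3

end E
end HS

namespace HS

section F
open Module Coalgebra HopfAlgebra
variable {k H : Type} [Field k] [Ring H] [HopfAlgebra k H] [FiniteDimensional k H]

/-- the square of the antipode -/
noncomputable def SS (k H : Type) [Field k] [Ring H] [HopfAlgebra k H] : Module.End k H :=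
  antipode k ∘ₗ antipode k

omit [FiniteDimensional k H] in
theorem SS_apply (x : H) : SS k H x = antipode k (antipode k x) := rfl

omit [FiniteDimensional k H] in
theorem SS_mul (x y : H) : SS k H (x * y) = SS k H x * SS k H y := by
  simp [SS_apply, HopfAlgebra.antipode_mul_antidistrib]

omit [FiniteDimensional k H] in
theorem exists_integral [IsSemisimpleRing H] :
    ∃ L : H, (∀ h, h * L = counit (R := k) h • L) ∧ counit (R := k) L = 1 := by
  let I : Submodule H H := RingHom.ker (Bialgebra.counitAlgHom k H)
  have hI : ∀ x, x ∈ I ↔ counit (R := k) x = 0 := fun x => Iff.rfl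
  obtain ⟨J, hJ⟩ := exists_isCompl I
  have h1 : (1 : H) ∈ I ⊔ J := by rw [hJ.sup_eq_top]; trivial
  obtain ⟨a, ha, L, hL, haL⟩ := Submodule.mem_sup.mp h1
  have hLe : L = 1 - a := by rw [← haL]; abel
  have hz : ∀ x ∈ I, x * L = 0 := by
    intro x hx
    have h2 : x * L ∈ J := J.smul_mem x hL
    have h3 : x * L ∈ I := by
      rw [hI, Bialgebra.counit_mul, (hI x).mp hx, zero_mul]
    have : x * L ∈ I ⊓ J := ⟨h3, h2⟩
    rw [hJ.inf_eq_bot] at this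
    simpa using this
  refine ⟨L, fun h => ?_, ?_⟩
  · have := hz (h - algebraMap k H (counit (R := k) h)) (by
      rw [hI, map_sub]; simp)
    rw [sub_mul, sub_eq_zero] at this
    rw [this, Algebra.smul_def]
  · rw [hLe, map_sub, (hI a).mp ha]; simp

omit [FiniteDimensional k H] in
theorem antipode_surj (N : ℕ) [NeZero N] (hN : SS k H ^ N = 1) :
    Function.Surjective (antipode k : H →ₗ[k] H) := by
  intro x
  have h1 : (SS k H ^ N) x = x := by rw [hN]; rfl
  obtain ⟨M, rfl⟩ := Nat.exists_eq_succ_of_ne_zero (NeZero.ne N)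
  rw [pow_succ', Module.End.mul_apply] at h1
  exact ⟨_, h1⟩

omit [FiniteDimensional k H] in
theorem integral_right (N : ℕ) [NeZero N] (hN : SS k H ^ N = 1) (L : H)
    (hL : ∀ h, h * L = counit (R := k) h • L) (hL1 : counit (R := k) L = 1) (h : H) :
    L * h = counit (R := k) h • L := by
  have h1 : ∀ h, antipode k L * h = counit (R := k) h • antipode k L := by
    intro h
    obtain ⟨y, rfl⟩ := antipode_surj N hN h
    rw [← HopfAlgebra.antipode_mul_antidistrib, hL, map_smul, HopfAlgebra.counit_antipode]
  have h2 : antipode k L = L := by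
    have := hL (antipode k L)
    rw [h1 L, hL1, one_smul, HopfAlgebra.counit_antipode, hL1, one_smul] at this
    exact this
  rw [← h2]; exact h1 h

section sw
variable {n : ℕ} {D : Fin n → H →ₗ[k] H} {e : Fin n → H}
  (hD : ∀ x : H, comul (R := k) x = ∑ i, D i x ⊗ₜ[k] e i)
include hD

omit [FiniteDimensional k H] in
theorem SS_center (N : ℕ) [NeZero N] (hN : SS k H ^ N = 1) (L : H)
    (hL : ∀ h, L * h = counit (R := k) h • L) (hL1 : counit (R := k) L = 1) (z : H)
    (hz : ∀ x, z * x = x * z) : SS k H z = z := by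
  have hPhi : ∀ a b : H, Phi k H (a ⊗ₜ b) = comul (R := k) a * (1 ⊗ₜ b) := by
    intro a b; rw [Phi_apply hD, hD, Finset.sum_mul]; simp
  have h1 : ∑ i, comul (R := k) (D i z) * (1 ⊗ₜ antipode k (e i)) = z ⊗ₜ[k] (1 : H) := by
    have := Phi_Psi hD (z ⊗ₜ 1)
    rw [Psi_apply hD, map_sum] at this
    simpa only [hPhi, mul_one] using this
  have h2 : comul (R := k) L * (z ⊗ₜ 1) = comul (R := k) L * (1 ⊗ₜ antipode k z) := by
    rw [← h1, Finset.mul_sum]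
    simp only [← mul_assoc, ← Bialgebra.comul_mul, hL, map_smul, smul_mul_assoc]
    simp only [← mul_smul_comm, ← TensorProduct.tmul_smul, ← map_smul]
    rw [← Finset.mul_sum, ← TensorProduct.tmul_sum, ← map_sum, sw_counit_left hD]
  have h3 := congrArg (LinearMap.mul' k H ∘ₗ LinearMap.lTensor H (antipode k)) h2
  simp only [hD L, Finset.sum_mul, map_sum, Algebra.TensorProduct.tmul_mul_tmul, mul_one,
    LinearMap.comp_apply, LinearMap.lTensor_tmul, LinearMap.mul'_apply,
    HopfAlgebra.antipode_mul_antidistrib] at h3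
  have hz2 : ∀ x, SS k H z * x = x * SS k H z := by
    intro x
    obtain ⟨y, rfl⟩ := antipode_surj N hN x
    obtain ⟨y, rfl⟩ := antipode_surj N hN y
    rw [← SS_apply, ← SS_mul, hz, SS_mul]
  have h4 : ∑ i, D i L * z * antipode k (e i) = z := by
    simp only [← hz, mul_assoc, ← Finset.mul_sum, sw_anti_right hD, hL1]; simp
  have h5 : ∑ i, D i L * (antipode k (antipode k z) * antipode k (e i)) = SS k H z := by
    simp only [← SS_apply, ← mul_assoc, ← hz2]
    simp only [mul_assoc, ← Finset.mul_sum, sw_anti_right hD, hL1]; simp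
  rw [← h5, ← h3, h4]

omit [FiniteDimensional k H] in
theorem comul_SS (x : H) : comul (R := k) (SS k H x) = ∑ i, SS k H (D i x) ⊗ₜ[k] SS k H (e i) := by
  have h : ∀ y, comul (R := k) (antipode k y) = TensorProduct.map (antipode k) (antipode k)
      (TensorProduct.comm k H H (comul (R := k) y)) := by
    intro y; rw [comul_antipode hD, hD]; simp
  rw [SS_apply, h, comul_antipode hD]
  simp [SS_apply]

/-- the regular character -/
noncomputable def chi (k H : Type) [Field k] [Ring H] [HopfAlgebra k H] : H →ₗ[k] k :=
  LinearMap.trace k H ∘ₗ LinearMap.mul k H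

omit [FiniteDimensional k H] hD in
theorem chi_apply (x : H) : chi k H x = LinearMap.trace k H (LinearMap.mulLeft k x) := rfl

omit [FiniteDimensional k H] hD in
theorem chi_SS (N : ℕ) [NeZero N] (hN : SS k H ^ N = 1) (x : H) : chi k H (SS k H x) = chi k H x := by
  have h1 : (LinearMap.mulLeft k (SS k H x) : Module.End k H) * SS k H =
      SS k H * LinearMap.mulLeft k x := by
    ext y; simp [SS_mul]
  have h2 : SS k H * SS k H ^ (N - 1) = 1 := by
    rw [← pow_succ', Nat.sub_add_cancel NeZero.one_le, hN]
  have h2' : SS k H ^ (N - 1) * SS k H = 1 := by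
    rw [← pow_succ, Nat.sub_add_cancel NeZero.one_le, hN]
  rw [chi_apply, chi_apply]
  have h3 : (LinearMap.mulLeft k (SS k H x) : Module.End k H) =
      SS k H * (LinearMap.mulLeft k x * SS k H ^ (N - 1)) := by
    rw [← mul_assoc, ← h1, mul_assoc, h2, mul_one]
  rw [h3, LinearMap.trace_mul_comm, mul_assoc, h2', mul_one]

theorem chi_conv (y : H) : ∑ j, chi k H (D j y) * chi k H (e j) = (finrank k H : k) * chi k H y := by
  have h1 : ∀ a b : H, LinearMap.mulLeft k (a ⊗ₜ[k] b) =
      TensorProduct.map (LinearMap.mulLeft k a) (LinearMap.mulLeft k b) := by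
    intro a b; ext; simp
  have h2 : LinearMap.trace k _ (LinearMap.mulLeft k (comul (R := k) y)) =
      LinearMap.trace k _ (LinearMap.mulLeft k (y ⊗ₜ[k] (1 : H))) := by
    have h3 : (LinearMap.mulLeft k (comul (R := k) y) : Module.End k (H ⊗[k] H)) =
        Phi k H * ((LinearMap.mulLeft k (y ⊗ₜ[k] (1 : H))) * Psi k H) := by
      refine LinearMap.ext fun X => ?_
      simp only [Module.End.mul_apply, LinearMap.mulLeft_apply]
      rw [Phi_mul, Phi_Psi hD]
    have h4 : (Psi k H : Module.End k (H ⊗[k] H)) * Phi k H = 1 :=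
      LinearMap.ext fun X => Psi_Phi hD X
    rw [h3, LinearMap.trace_mul_comm, mul_assoc, h4, mul_one]
  rw [h1, LinearMap.trace_tensorProduct', LinearMap.mulLeft_one, LinearMap.trace_id] at h2
  rw [mul_comm, chi_apply y, ← h2, hD]
  have h5 : LinearMap.mulLeft k (∑ i, D i y ⊗ₜ[k] e i) =
      ∑ i, TensorProduct.map (LinearMap.mulLeft k (D i y)) (LinearMap.mulLeft k (e i)) := by
    simp only [← h1]
    ext; simp [Finset.sum_mul]
  rw [h5, map_sum]
  simp only [LinearMap.trace_tensorProduct', chi_apply]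


/-- convolution with the regular character -/
noncomputable def PP (k H : Type) [Field k] [Ring H] [HopfAlgebra k H] : Module.End k H :=
  (TensorProduct.lid k H).toLinearMap ∘ₗ LinearMap.rTensor H (chi k H) ∘ₗ comul (R := k)

omit [FiniteDimensional k H] in
theorem PP_apply (x : H) : PP k H x = ∑ i, chi k H (D i x) • e i := by
  simp [PP, hD]

theorem PP_sq : PP k H * PP k H = (finrank k H : k) • PP k H := by
  refine LinearMap.ext fun x => ?_
  rw [Module.End.mul_apply, PP_apply hD x, map_sum]
  simp only [map_smul, PP_apply hD, Finset.smul_sum, LinearMap.smul_apply]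
  have := sw_coassoc hD ((TensorProduct.lid k H).toLinearMap ∘ₗ
    (LinearMap.lTensor k ((TensorProduct.lid k H).toLinearMap)) ∘ₗ
    TensorProduct.map (chi k H) (LinearMap.rTensor H (chi k H))) x
  simp only [LinearMap.comp_apply, TensorProduct.map_tmul, LinearMap.rTensor_tmul,
    LinearMap.lTensor_tmul, LinearEquiv.coe_coe, TensorProduct.lid_tmul] at this
  simp only [smul_smul, smul_eq_mul] at this ⊢
  rw [← this]
  simp only [← Finset.sum_smul, chi_conv hD]

omit [FiniteDimensional k H] in
theorem PP_SS (N : ℕ) [NeZero N] (hN : SS k H ^ N = 1) : PP k H * SS k H = SS k H * PP k H := by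
  refine LinearMap.ext fun x => ?_
  simp only [Module.End.mul_apply]
  rw [PP_apply hD x, map_sum]
  conv_lhs => simp only [PP, LinearMap.comp_apply, comul_SS hD]
  simp [chi_SS N hN]

theorem chi_LT : chi k H (∑ j, D j (antipode k (antipode k (e j)))) =
    LinearMap.trace k H (SS k H * PP k H) := by
  refine LT_func hD (chi k H) _ fun x => ?_
  rw [Module.End.mul_apply, PP_apply hD]
  simp [SS_apply]

end sw

theorem trace_SS_ne_zero [IsAlgClosed k] [CharZero k] [IsSemisimpleRing H]
    {L : Type} [Field L] (N : ℕ) [NeZero N] (ι : L →+* k) (z : L)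
    (hz : IsPrimitiveRoot z N) (φ : L →+* ℂ) (hN : SS k H ^ N = 1)
    (Λ : H) (hl : ∀ h, h * Λ = counit (R := k) h • Λ) (hr : ∀ h, Λ * h = counit (R := k) h • Λ)
    (h1 : counit (R := k) Λ = 1) : LinearMap.trace k H (SS k H) ≠ 0 := by
  obtain ⟨n, D, e, hD⟩ := exists_sweedler k H
  obtain ⟨m, d, -, ⟨E⟩⟩ := IsSemisimpleRing.exists_algEquiv_pi_matrix_of_isAlgClosed k H
  rw [← LinearMap.trace_conj' _ E.toLinearEquiv]
  refine prod_trace_ne_zero N ι z hz φ d _ ?_ ?_ ?_ (E Λ) ?_ ?_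
  · intro x y
    simp [LinearEquiv.conj_apply, SS_mul]
  · intro i
    have hc : SS k H (E.symm (Pi.single i 1)) = E.symm (Pi.single i 1) := by
      refine SS_center hD N hN Λ hr h1 _ fun x => ?_
      apply E.injective
      simp only [map_mul, AlgEquiv.apply_symm_apply]
      ext j : 1
      by_cases hj : j = i
      · subst hj; simp
      · simp [hj]
    simp [LinearEquiv.conj_apply, hc]
  · have := map_pow (E.toLinearEquiv.conjAlgEquiv k) (SS k H) N
    rw [hN, map_one] at this
    exact this.symm
  · rw [Ne, EmbeddingLike.map_eq_zero_iff]
    rintro rfl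
    simp at h1
  · intro x
    refine ⟨counit (R := k) (E.symm x), ?_⟩
    apply E.symm.injective
    simp [hl]

theorem exists_field (N : ℕ) [NeZero N] :
    ∃ (L : Type) (_ : Field L) (_ : NumberField L) (z : L), IsPrimitiveRoot z N := by
  have : NeZero ((N : ℕ) : ℚ) := ⟨by exact_mod_cast NeZero.ne N⟩
  have hc := CyclotomicField.isCyclotomicExtension N ℚ
  exact ⟨CyclotomicField N ℚ, inferInstance, inferInstance, _,
    @IsCyclotomicExtension.zeta_spec N _ ℚ _ _ _ _ hc⟩

theorem T2 [IsAlgClosed k] [CharZero k] [IsSemisimpleRing H]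
    (N : ℕ) [NeZero N] (hN : SS k H ^ N = 1) : SS k H = 1 := by
  obtain ⟨L, _, _, z, hz⟩ := exists_field N
  obtain ⟨ι⟩ : Nonempty (L →+* k) := ⟨(IsAlgClosed.lift : L →ₐ[ℚ] k).toRingHom⟩
  obtain ⟨φ⟩ : Nonempty (L →+* ℂ) := inferInstance
  obtain ⟨Λ, hl, h1⟩ := exists_integral (k := k) (H := H)
  have hr := integral_right N hN Λ hl h1
  have htr := trace_SS_ne_zero N ι z hz φ hN Λ hl hr h1
  obtain ⟨n, D, e, hD⟩ := exists_sweedler k H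
  -- trace identity
  set LT := ∑ j, D j (antipode k (antipode k (e j))) with hLT
  have hLT1 : LT = LinearMap.trace k H (SS k H) • Λ := by
    have h2 := LT_integral hD Λ
    rw [← hLT, hr, h1, one_smul, hLT, LT_counit hD, ← hLT] at h2
    exact h2.symm
  have hchiΛ : chi k H Λ = 1 := by
    have : (LinearMap.mulLeft k Λ : H →ₗ[k] H) = (counit (R := k)).smulRight Λ := by
      ext x; simp [hr]
    rw [chi_apply, this, LinearMap.trace_smulRight, h1]
  have hT : LinearMap.trace k H (SS k H * PP k H) = LinearMap.trace k H (SS k H) := by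
    rw [← chi_LT hD, ← hLT, hLT1, map_smul, hchiΛ]; simp
  set q : k := (finrank k H : k) with hq
  have hnt : Nontrivial H := by
    refine ⟨⟨Λ, 0, ?_⟩⟩
    rintro rfl
    simp at h1
  have hfr : finrank k H ≠ 0 := finrank_pos.ne'
  have hq0 : q ≠ 0 := by rw [hq]; exact_mod_cast hfr
  have hM : ∀ j : ℕ, (q⁻¹ • (SS k H * PP k H)) ^ (j + 1) = q⁻¹ • (SS k H ^ (j + 1) * PP k H) := by
    intro j
    induction j with
    | zero => simp
    | succ j ih =>
      rw [pow_succ, ih, smul_mul_smul_comm, mul_assoc, ← mul_assoc (PP k H), PP_SS hD N hN,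
        mul_assoc, PP_sq hD, ← hq, ← mul_assoc, ← pow_succ, mul_smul_comm, smul_smul,
        mul_assoc, inv_mul_cancel₀ hq0, mul_one]
  have hintg := trace_integral (q⁻¹ • (SS k H * PP k H)) N (by
    rw [hM, pow_succ', hN, mul_one])
  rw [map_smul, hT] at hintg
  obtain ⟨m, hm, hsum, hm0, hm1⟩ := eig_decomp (SS k H) N hN (ι z) (hz.map_of_injective ι.injective)
  apply hm1
  have htr1 : LinearMap.trace k H (SS k H) = ι (∑ i, (m i : L) * z ^ (i : ℕ)) := by
    have := hm 1
    simp only [pow_one] at this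
    rw [this]; simp
  have hfrL : ((finrank k H : ℕ) : L) ≠ 0 := by exact_mod_cast hfr
  refine sum_rigid N z hz m (finrank k H) hsum hfr (hm0 ⟨1, one_ne_zero, ?_⟩)
    (((finrank k H : ℕ) : L)⁻¹ * (∑ i, (m i : L) * z ^ (i : ℕ))) ?_ ?_ ?_
  · simp [SS_apply]
  · rw [← mul_assoc, mul_inv_cancel₀ hfrL, one_mul]
  · refine mul_ne_zero (inv_ne_zero hfrL) ?_
    intro h0
    rw [htr1, h0, map_zero] at htr
    exact htr rfl
  · rw [htr1] at hintg
    have h3 : ι (((finrank k H : ℕ) : L)⁻¹ * (∑ i, (m i : L) * z ^ (i : ℕ))) =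
      q⁻¹ • ι (∑ i, (m i : L) * z ^ (i : ℕ)) := by
      rw [map_mul, map_inv₀, map_natCast]; rfl
    rw [← h3] at hintg
    exact (isIntegral_algHom_iff (ι.toIntAlgHom) ι.injective).mp hintg

end F
end HS

namespace HS

section G0
open Module Coalgebra HopfAlgebra
variable {k H M : Type} [Field k] [Ring H] [Algebra k H] [AddCommGroup M] [Module k M]

/-- a linear map on `H ⊗ H` from a bilinear function -/
noncomputable def bi (F : H → H → M)
    (h1 : ∀ y, IsLinearMap k (fun x => F x y) := by
      intro _; constructor <;> intros <;>
        simp [mul_add, add_mul, TensorProduct.tmul_add, TensorProduct.add_tmul,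
          TensorProduct.smul_tmul', add_smul, smul_smul, mul_comm,
          HopfAlgebra.antipode_mul_antidistrib])
    (h2 : ∀ x, IsLinearMap k (fun y => F x y) := by
      intro _; constructor <;> intros <;>
        simp [mul_add, add_mul, TensorProduct.tmul_add, TensorProduct.add_tmul,
          TensorProduct.smul_tmul', add_smul, smul_smul, mul_comm,
          HopfAlgebra.antipode_mul_antidistrib]) :
    H ⊗[k] H →ₗ[k] M :=
  TensorProduct.lift (LinearMap.mk₂ k F (fun x x' y => (h1 y).1 x x') (fun c x y => (h1 y).2 c x)
    (fun x y y' => (h2 x).1 y y') (fun c x y => (h2 x).2 c y))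

theorem bi_tmul (F : H → H → M) (h1 h2) (x y : H) : bi (k := k) F h1 h2 (x ⊗ₜ y) = F x y := rfl

/-- a linear map on `H ⊗ (H ⊗ H)` from a trilinear function -/
noncomputable def tri (F : H → H → H → M)
    (h1 : ∀ y z, IsLinearMap k (fun x => F x y z) := by
      intro _ _; constructor <;> intros <;>
        simp [mul_add, add_mul, TensorProduct.tmul_add, TensorProduct.add_tmul,
          TensorProduct.smul_tmul', add_smul, smul_smul, mul_comm,
          HopfAlgebra.antipode_mul_antidistrib])
    (h2 : ∀ x z, IsLinearMap k (fun y => F x y z) := by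
      intro _ _; constructor <;> intros <;>
        simp [mul_add, add_mul, TensorProduct.tmul_add, TensorProduct.add_tmul,
          TensorProduct.smul_tmul', add_smul, smul_smul, mul_comm,
          HopfAlgebra.antipode_mul_antidistrib])
    (h3 : ∀ x y, IsLinearMap k (fun z => F x y z) := by
      intro _ _; constructor <;> intros <;>
        simp [mul_add, add_mul, TensorProduct.tmul_add, TensorProduct.add_tmul,
          TensorProduct.smul_tmul', add_smul, smul_smul, mul_comm,
          HopfAlgebra.antipode_mul_antidistrib]) :
    H ⊗[k] (H ⊗[k] H) →ₗ[k] M :=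
  TensorProduct.lift
    { toFun := fun x => bi (F x) (h2 x) (h3 x)
      map_add' := fun x x' => by
        ext y z
        simpa [bi_tmul] using (h1 y z).1 x x'
      map_smul' := fun c x => by
        ext y z
        simpa [bi_tmul] using (h1 y z).2 c x }

theorem tri_tmul (F : H → H → H → M) (h1 h2 h3) (x y z : H) :
    tri (k := k) F h1 h2 h3 (x ⊗ₜ (y ⊗ₜ z)) = F x y z := rfl

end G0

open Module Coalgebra HopfAlgebra

/-- quasitriangular structure in coordinates -/
structure QT (k H : Type) [Field k] [Ring H] [HopfAlgebra k H] {n r : ℕ}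
    (D : Fin n → H →ₗ[k] H) (e : Fin n → H) (a b : Fin r → H) : Prop where
  hD : ∀ x : H, comul (R := k) x = ∑ i, D i x ⊗ₜ[k] e i
  hu : IsUnit (∑ i, a i ⊗ₜ[k] b i)
  q1 : ∑ i, ∑ l, D l (a i) ⊗ₜ[k] (e l ⊗ₜ[k] b i) = ∑ i, ∑ j, a i ⊗ₜ[k] (a j ⊗ₜ[k] (b i * b j))
  q2 : ∑ i, ∑ l, a i ⊗ₜ[k] (D l (b i) ⊗ₜ[k] e l) = ∑ i, ∑ j, (a i * a j) ⊗ₜ[k] (b j ⊗ₜ[k] b i)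
  q3 : ∀ h, ∑ l, ∑ i, (e l * a i) ⊗ₜ[k] (D l h * b i) = ∑ l, ∑ i, (a i * D l h) ⊗ₜ[k] (b i * e l)

namespace QT
variable {k H : Type} [Field k] [Ring H] [HopfAlgebra k H] {n r : ℕ}
    {D : Fin n → H →ₗ[k] H} {e : Fin n → H} {a b : Fin r → H}

theorem eps1 (h : QT k H D e a b) : ∑ i, counit (R := k) (a i) • b i = 1 := by
  have h1 := congrArg (tri (k := k) (fun x y z => counit (R := k) x • (y ⊗ₜ[k] z))) h.q1
  simp only [map_sum, tri_tmul, TensorProduct.smul_tmul', ← TensorProduct.sum_tmul,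
    sw_counit_left h.hD] at h1
  have h2 : (1 ⊗ₜ[k] (∑ i, counit (R := k) (a i) • b i)) * (∑ i, a i ⊗ₜ[k] b i) =
      1 * ∑ i, a i ⊗ₜ[k] b i := by
    conv_rhs => rw [one_mul, h1]
    rw [TensorProduct.tmul_sum, Finset.sum_mul]
    simp only [Finset.mul_sum, Algebra.TensorProduct.tmul_mul_tmul, one_mul, smul_mul_assoc,
      TensorProduct.smul_tmul, TensorProduct.tmul_smul]
  have h3 := h.hu.mul_right_cancel h2
  have h4 := congrArg (TensorProduct.lid k H ∘ LinearMap.rTensor H (counit (R := k))) h3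
  simpa [Algebra.TensorProduct.one_def] using h4

theorem eps2 (h : QT k H D e a b) : ∑ i, counit (R := k) (b i) • a i = 1 := by
  have h1 := congrArg (tri (k := k) (fun x y z => counit (R := k) y • (x ⊗ₜ[k] z))) h.q2
  simp only [map_sum, tri_tmul] at h1
  simp only [← TensorProduct.tmul_smul, ← TensorProduct.tmul_sum,
    sw_counit_left h.hD] at h1
  have h2 : (∑ i, a i ⊗ₜ[k] b i) * ((∑ i, counit (R := k) (b i) • a i) ⊗ₜ[k] 1)  =
      (∑ i, a i ⊗ₜ[k] b i) * 1 := by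
    conv_rhs => rw [mul_one, h1]
    rw [TensorProduct.sum_tmul, Finset.sum_mul]
    simp only [Finset.mul_sum, Algebra.TensorProduct.tmul_mul_tmul, mul_one, mul_smul_comm,
      TensorProduct.smul_tmul, TensorProduct.tmul_smul]
  have h3 := h.hu.mul_left_cancel h2
  have h4 := congrArg (TensorProduct.rid k H ∘ LinearMap.lTensor H (counit (R := k))) h3
  simpa [Algebra.TensorProduct.one_def] using h4

theorem I1 (h : QT k H D e a b) :
    ∑ i, ∑ j, (a i * a j) ⊗ₜ[k] (antipode k (b j) * b i) = 1 ⊗ₜ[k] 1 := by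
  have h1 := congrArg (tri (k := k) (fun x y z => x ⊗ₜ[k] (antipode k y * z))) h.q2
  simp only [map_sum, tri_tmul] at h1
  rw [← h1]
  simp only [← TensorProduct.tmul_sum, sw_anti_left h.hD, TensorProduct.tmul_smul]
  simp only [TensorProduct.smul_tmul', ← TensorProduct.sum_tmul, eps2 h]

theorem I2 (h : QT k H D e a b) :
    ∑ i, ∑ j, (a i * a j) ⊗ₜ[k] (b j * antipode k (b i)) = 1 ⊗ₜ[k] 1 := by
  have h1 := congrArg (tri (k := k) (fun x y z => x ⊗ₜ[k] (y * antipode k z))) h.q2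
  simp only [map_sum, tri_tmul] at h1
  rw [← h1]
  simp only [← TensorProduct.tmul_sum, sw_anti_right h.hD, TensorProduct.tmul_smul]
  simp only [TensorProduct.smul_tmul', ← TensorProduct.sum_tmul, eps2 h]

theorem I3 (h : QT k H D e a b) :
    ∑ i, ∑ j, (antipode k (a i) * a j) ⊗ₜ[k] (b i * b j) = 1 ⊗ₜ[k] 1 := by
  have h1 := congrArg (tri (k := k) (fun x y z => (antipode k x * y) ⊗ₜ[k] z)) h.q1
  simp only [map_sum, tri_tmul] at h1
  rw [← h1]
  simp only [← TensorProduct.sum_tmul, sw_anti_left h.hD, TensorProduct.smul_tmul]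
  simp only [← TensorProduct.tmul_sum, eps1 h]

theorem SSR (h : QT k H D e a b) :
    ∑ i, antipode k (a i) ⊗ₜ[k] antipode k (b i) = ∑ i, a i ⊗ₜ[k] b i := by
  have h1 : ∀ i, antipode k (a i) ⊗ₜ[k] antipode k (b i) = ∑ j, ∑ l,
      (antipode k (a i) * a j * a l) ⊗ₜ[k] (b l * antipode k (b j) * antipode k (b i)) := by
    intro i
    have := congrArg (bi (k := k) (fun x y => (antipode k (a i) * x) ⊗ₜ[k] (y * antipode k (b i)))) h.I2
    simp only [map_sum, bi_tmul, mul_one, one_mul] at this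
    rw [← this]
    simp only [mul_assoc]
  have h2 := congrArg (bi (k := k) (fun x y => ∑ l, (x * a l) ⊗ₜ[k] (b l * antipode k y))
    (h1 := fun y => ⟨fun x x' => by simp [add_mul, TensorProduct.add_tmul, Finset.sum_add_distrib],
      fun c x => by simp [TensorProduct.smul_tmul', Finset.smul_sum]⟩)
    (h2 := fun y => ⟨fun x x' => by simp [mul_add, TensorProduct.tmul_add, Finset.sum_add_distrib],
      fun c x => by simp [Finset.smul_sum]⟩)) h.I3
  simp only [map_sum, bi_tmul, mul_one, one_mul, HopfAlgebra.antipode_one] at h2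
  rw [← h2]
  simp only [h1, HopfAlgebra.antipode_mul_antidistrib, mul_assoc]

theorem SSR2 (h : QT k H D e a b) {M : Type} [AddCommGroup M] [Module k M] (T : H ⊗[k] H →ₗ[k] M) :
    ∑ i, T (antipode k (a i) ⊗ₜ[k] antipode k (b i)) = ∑ i, T (a i ⊗ₜ[k] b i) := by
  rw [← map_sum, h.SSR, map_sum]

end QT
end HS

namespace HS
open Module Coalgebra HopfAlgebra
namespace QT
variable {k H : Type} [Field k] [Ring H] [HopfAlgebra k H] {n r : ℕ}
    {D : Fin n → H →ₗ[k] H} {e : Fin n → H} {a b : Fin r → H}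

/-- the Drinfeld element -/
noncomputable def uu (k : Type) {H : Type} [Field k] [Ring H] [HopfAlgebra k H] {r : ℕ}
    (a b : Fin r → H) : H := ∑ i, antipode k (b i) * a i

/-- its inverse -/
noncomputable def ww (k : Type) {H : Type} [Field k] [Ring H] [HopfAlgebra k H] {r : ℕ}
    (a b : Fin r → H) : H := ∑ i, b i * antipode k (antipode k (a i))

theorem star (h : QT k H D e a b) (x : H) :
    ∑ l, antipode k (e l) * uu k a b * D l x = counit (R := k) x • uu k a b := by
  have h1 := congrArg (bi (k := k) (fun x y => antipode k y * x)) (h.q3 x)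
  simp only [map_sum, bi_tmul, antipode_mul_antidistrib] at h1
  have h2 : ∑ l, antipode k (e l) * uu k a b * D l x =
      ∑ l, ∑ i, antipode k (e l) * antipode k (b i) * (a i * D l x) := by
    simp only [uu, Finset.mul_sum, Finset.sum_mul, mul_assoc]
  rw [h2, ← h1, Finset.sum_comm]
  have h3 : ∀ i, ∑ l, antipode k (b i) * antipode k (D l x) * (e l * a i) =
      antipode k (b i) * (∑ l, antipode k (D l x) * e l) * a i := by
    intro i
    simp only [Finset.mul_sum, Finset.sum_mul, mul_assoc]
  simp only [h3, sw_anti_left h.hD, uu, Finset.smul_sum]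
  simp

theorem S2u (h : QT k H D e a b) (x : H) :
    antipode k (antipode k x) * uu k a b = uu k a b * x := by
  have h1 := sw_coassoc h.hD (tri (k := k) (fun x y z =>
    antipode k (antipode k z) * (antipode k y * uu k a b * x))) x
  simp only [tri_tmul, ← Finset.mul_sum, star h] at h1
  have h2 : ∀ i, ∑ j, antipode k (antipode k (e j)) * (antipode k (D j (e i)) * uu k a b * D i x) =
      antipode k (∑ j, D j (e i) * antipode k (e j)) * uu k a b * D i x := by
    intro i
    simp only [map_sum, antipode_mul_antidistrib, Finset.sum_mul, mul_assoc]
  simp only [h2, sw_anti_right h.hD] at h1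
  simp only [mul_smul_comm, map_smul, antipode_one, smul_mul_assoc, one_mul] at h1
  simp only [← smul_mul_assoc, ← map_smul, ← Finset.sum_mul, ← map_sum,
    sw_counit_left h.hD] at h1
  rw [h1]
  simp only [smul_mul_assoc, ← mul_smul_comm, ← Finset.mul_sum, sw_counit_right h.hD]

theorem wu (h : QT k H D e a b) : ww k a b * uu k a b = 1 := by
  have h1 := congrArg (bi (k := k) (fun x y => y * x)) h.I2
  simp only [map_sum, bi_tmul, mul_one] at h1
  rw [← h1, ww, Finset.sum_mul]
  simp only [mul_assoc, S2u h]
  simp only [uu, Finset.sum_mul, Finset.mul_sum, mul_assoc]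
  rw [Finset.sum_comm]

theorem S2w (h : QT k H D e a b) : antipode k (antipode k (ww k a b)) = ww k a b := by
  have h1 := h.SSR2 (bi (k := k) (fun x y => antipode k y * antipode k (antipode k (antipode k x))))
  have h2 := h.SSR2 (bi (k := k) (fun x y => y * antipode k (antipode k x)))
  simp only [bi_tmul] at h1 h2
  simp only [ww, map_sum, antipode_mul_antidistrib]
  rw [h1, h2]

theorem uw (h : QT k H D e a b) : uu k a b * ww k a b = 1 := by
  rw [← S2u h, S2w h, wu h]

theorem S2 (h : QT k H D e a b) (x : H) :
    antipode k (antipode k x) = uu k a b * x * ww k a b := by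
  rw [← S2u h, mul_assoc, uw h, mul_one]

theorem S_surj (h : QT k H D e a b) (x : H) : ∃ y, antipode k (antipode k y) = x := by
  refine ⟨ww k a b * x * uu k a b, ?_⟩
  rw [S2 h]
  simp only [mul_assoc, uw h, mul_one]
  rw [← mul_assoc, uw h, one_mul]

theorem S_inj (h : QT k H D e a b) (x y : H) (hxy : antipode k x = antipode k y) : x = y := by
  have h1 : ∀ z, z = ww k a b * antipode k (antipode k z) * uu k a b := by
    intro z
    rw [S2 h]
    simp only [mul_assoc, wu h, mul_one]
    rw [← mul_assoc, wu h, one_mul]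
  rw [h1 x, h1 y, hxy]

/-- `v = S(u)` -/
noncomputable def vv (k : Type) {H : Type} [Field k] [Ring H] [HopfAlgebra k H] {r : ℕ}
    (a b : Fin r → H) : H := antipode k (uu k a b)
/-- the image of the inverse under the antipode -/
noncomputable def ww' (k : Type) {H : Type} [Field k] [Ring H] [HopfAlgebra k H] {r : ℕ}
    (a b : Fin r → H) : H := antipode k (ww k a b)

theorem vv_eq (h : QT k H D e a b) : vv k a b = ∑ i, a i * antipode k (b i) := by
  have h2 := h.SSR2 (bi (k := k) (fun x y => x * antipode k y))
  simp only [bi_tmul] at h2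
  rw [← h2]
  simp only [vv, uu, map_sum, antipode_mul_antidistrib]

theorem vw (h : QT k H D e a b) : vv k a b * ww' k a b = 1 := by
  rw [vv, ww', ← antipode_mul_antidistrib, wu h, antipode_one]

theorem wv (h : QT k H D e a b) : ww' k a b * vv k a b = 1 := by
  rw [vv, ww', ← antipode_mul_antidistrib, uw h, antipode_one]

theorem vS2 (h : QT k H D e a b) (x : H) :
    vv k a b * antipode k (antipode k x) = x * vv k a b := by
  obtain ⟨y, rfl⟩ := S_surj h x
  have := congrArg (antipode k) (S2u h (antipode k y))
  simpa only [antipode_mul_antidistrib, vv] using this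

theorem S2' (h : QT k H D e a b) (x : H) :
    antipode k (antipode k x) = ww' k a b * x * vv k a b := by
  rw [mul_assoc, ← vS2 h, ← mul_assoc, wv h, one_mul]

theorem S2uu (h : QT k H D e a b) : antipode k (antipode k (uu k a b)) = uu k a b := by
  rw [S2 h, mul_assoc, uw h, mul_one]

theorem uv (h : QT k H D e a b) : uu k a b * vv k a b = vv k a b * uu k a b := by
  rw [← S2u h]
  simp only [vv]
  rw [S2uu h]

/-- `g = u S(u)⁻¹` -/
noncomputable def gg (k : Type) {H : Type} [Field k] [Ring H] [HopfAlgebra k H] {r : ℕ}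
    (a b : Fin r → H) : H := uu k a b * ww' k a b

theorem gv (h : QT k H D e a b) : gg k a b * vv k a b = uu k a b := by
  rw [gg, mul_assoc, wv h, mul_one]

theorem g_inv (h : QT k H D e a b) : gg k a b * (vv k a b * ww k a b) = 1 := by
  rw [← mul_assoc, gv h, uw h]

theorem g_inv' (h : QT k H D e a b) : (vv k a b * ww k a b) * gg k a b = 1 := by
  rw [gg, mul_assoc, ← mul_assoc (ww k a b), wu h, one_mul, vw h]

theorem S4 (h : QT k H D e a b) (x : H) :
    SS k H (SS k H x) = gg k a b * x * (vv k a b * ww k a b) := by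
  simp only [SS_apply]
  rw [S2 h (antipode k (antipode k x)), S2' h x, gg]
  simp only [mul_assoc]

end QT
end HS

namespace HS
open Module Coalgebra HopfAlgebra
namespace QT
variable {k H : Type} [Field k] [Ring H] [HopfAlgebra k H] {n r : ℕ}
    {D : Fin n → H →ₗ[k] H} {e : Fin n → H} {a b : Fin r → H}

/-- the R-matrix -/
noncomputable def RR (k : Type) {H : Type} [Field k] [Ring H] [HopfAlgebra k H] {r : ℕ}
    (a b : Fin r → H) : H ⊗[k] H := ∑ i, a i ⊗ₜ[k] b i

theorem comm_mul (X Y : H ⊗[k] H) : TensorProduct.comm k H H (X * Y) =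
    TensorProduct.comm k H H X * TensorProduct.comm k H H Y :=
  map_mul (Algebra.TensorProduct.comm k H H) X Y

theorem comm_comm (X : H ⊗[k] H) :
    TensorProduct.comm k H H (TensorProduct.comm k H H X) = X := by
  induction X with
  | zero => simp
  | add x y hx hy => simp [hx, hy]
  | tmul x y => simp

theorem comm_RR : TensorProduct.comm k H H (RR k a b) = RR k b a := by
  simp [RR]

theorem q3' (h : QT k H D e a b) (x : H) :
    TensorProduct.comm k H H (comul (R := k) x) * RR k a b = RR k a b * comul (R := k) x := by
  have := h.q3 x
  rw [h.hD, map_sum]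
  simp only [RR, TensorProduct.comm_tmul, Finset.sum_mul_sum,
    Algebra.TensorProduct.tmul_mul_tmul]
  rw [this, Finset.sum_comm]

theorem q3'' (h : QT k H D e a b) (x : H) :
    comul (R := k) x * RR k b a = RR k b a * TensorProduct.comm k H H (comul (R := k) x) := by
  have := congrArg (TensorProduct.comm k H H) (h.q3' x)
  rwa [comm_mul, comm_mul, comm_comm, comm_RR] at this

theorem Q_comm (h : QT k H D e a b) (x : H) :
    comul (R := k) x * (RR k b a * RR k a b) = (RR k b a * RR k a b) * comul (R := k) x := by
  rw [← mul_assoc, q3'' h, mul_assoc, q3' h, mul_assoc]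

theorem inner1 (h : QT k H D e a b) :
    ∑ i, (antipode k (b i) ⊗ₜ[k] 1) * RR k b a * TensorProduct.comm k H H (comul (R := k) (a i)) =
      uu k a b ⊗ₜ[k] 1 := by
  have h1 : ∀ m, ∑ i, ∑ l, (antipode k (b i) * b m * e l) ⊗ₜ[k] (a m * D l (a i)) =
      ∑ i, ∑ j, (antipode k (b j) * antipode k (b i) * b m * a j) ⊗ₜ[k] (a m * a i) := by
    intro m
    have := congrArg (tri (k := k) (fun x y z => (antipode k z * b m * y) ⊗ₜ[k] (a m * x))) h.q1
    simpa only [map_sum, tri_tmul, antipode_mul_antidistrib] using this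
  have h2 : ∀ j, ∑ m, ∑ i, (antipode k (b j) * antipode k (b i) * b m * a j) ⊗ₜ[k] (a m * a i) =
      (antipode k (b j) * a j) ⊗ₜ[k] 1 := by
    intro j
    have := congrArg (bi (k := k) (fun x y => (antipode k (b j) * y * a j) ⊗ₜ[k] x)) h.I1
    simpa only [map_sum, bi_tmul, mul_one, one_mul, mul_assoc] using this
  rw [uu, TensorProduct.sum_tmul]
  simp only [← h2]
  rw [Finset.sum_comm]
  have h3 : ∀ m, ∑ j, ∑ i, (antipode k (b j) * antipode k (b i) * b m * a j) ⊗ₜ[k] (a m * a i) =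
     ∑ i, ∑ l, (antipode k (b i) * b m * e l) ⊗ₜ[k] (a m * D l (a i)) := by
    intro m
    rw [h1 m, Finset.sum_comm]
  simp only [h3]
  rw [Finset.sum_comm]
  refine Finset.sum_congr rfl fun i _ => ?_
  rw [h.hD, map_sum]
  simp only [RR, TensorProduct.comm_tmul, Finset.mul_sum, Finset.sum_mul,
    Algebra.TensorProduct.tmul_mul_tmul, one_mul]
  rw [Finset.sum_comm]

theorem inner2 (h : QT k H D e a b) :
    ∑ i, (1 ⊗ₜ[k] antipode k (b i)) * RR k a b * comul (R := k) (a i) =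
      1 ⊗ₜ[k] uu k a b := by
  have h1 : ∀ m, ∑ i, ∑ l, (a m * D l (a i)) ⊗ₜ[k] (antipode k (b i) * b m * e l) =
      ∑ i, ∑ j, (a m * a i) ⊗ₜ[k] (antipode k (b j) * antipode k (b i) * b m * a j) := by
    intro m
    have := congrArg (tri (k := k) (fun x y z => (a m * x) ⊗ₜ[k] (antipode k z * b m * y))) h.q1
    simpa only [map_sum, tri_tmul, antipode_mul_antidistrib] using this
  have h2 : ∀ j, ∑ m, ∑ i, (a m * a i) ⊗ₜ[k] (antipode k (b j) * antipode k (b i) * b m * a j) =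
      1 ⊗ₜ[k] (antipode k (b j) * a j) := by
    intro j
    have := congrArg (bi (k := k) (fun x y => x ⊗ₜ[k] (antipode k (b j) * y * a j))) h.I1
    simpa only [map_sum, bi_tmul, mul_one, one_mul, mul_assoc] using this
  rw [uu, TensorProduct.tmul_sum]
  simp only [← h2]
  rw [Finset.sum_comm]
  have h3 : ∀ m, ∑ j, ∑ i, (a m * a i) ⊗ₜ[k] (antipode k (b j) * antipode k (b i) * b m * a j) =
     ∑ i, ∑ l, (a m * D l (a i)) ⊗ₜ[k] (antipode k (b i) * b m * e l) := by
    intro m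
    rw [h1 m, Finset.sum_comm]
  simp only [h3]
  rw [Finset.sum_comm]
  refine Finset.sum_congr rfl fun i _ => ?_
  rw [h.hD]
  simp only [RR, Finset.mul_sum, Finset.sum_mul,
    Algebra.TensorProduct.tmul_mul_tmul, one_mul]
  rw [Finset.sum_comm]

theorem comul_u (h : QT k H D e a b) :
    comul (R := k) (uu k a b) * (RR k b a * RR k a b) = uu k a b ⊗ₜ[k] uu k a b := by
  set Q := RR k b a * RR k a b with hQ
  have h1 := congrArg (tri (k := k) (M := H ⊗[k] H)
    (fun x y z => (antipode k z ⊗ₜ[k] antipode k y) * Q * comul (R := k) x)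
    (h2 := fun x z => ⟨fun y y' => by simp [TensorProduct.tmul_add, add_mul],
      fun c y => by rw [map_smul, TensorProduct.tmul_smul, smul_mul_assoc, smul_mul_assoc]⟩)
    (h3 := fun x z => ⟨fun y y' => by simp [TensorProduct.add_tmul, add_mul],
      fun c y => by rw [map_smul, ← TensorProduct.smul_tmul', smul_mul_assoc, smul_mul_assoc]⟩)) h.q2
  simp only [map_sum, tri_tmul] at h1
  have h2 : comul (R := k) (uu k a b) * Q = ∑ i, ∑ l,
      (antipode k (e l) ⊗ₜ[k] antipode k (D l (b i))) * Q * comul (R := k) (a i) := by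
    simp only [uu, map_sum, Finset.sum_mul, Bialgebra.comul_mul]
    refine Finset.sum_congr rfl fun i _ => ?_
    rw [mul_assoc, hQ, Q_comm h, ← mul_assoc, comul_antipode h.hD, Finset.sum_mul, Finset.sum_mul]
  rw [h2, h1, Finset.sum_comm]
  have h3 : ∀ j, ∑ i, (antipode k (b i) ⊗ₜ[k] antipode k (b j)) * Q * comul (R := k) (a i * a j) =
      (uu k a b ⊗ₜ[k] 1) * ((1 ⊗ₜ[k] antipode k (b j)) * RR k a b * comul (R := k) (a j)) := by
    intro j
    have h4 : (uu k a b ⊗ₜ[k] (1 : H)) * (1 ⊗ₜ[k] antipode k (b j)) =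
        (1 ⊗ₜ[k] antipode k (b j)) * (uu k a b ⊗ₜ[k] (1 : H)) := by simp
    rw [mul_assoc (1 ⊗ₜ[k] antipode k (b j)), ← mul_assoc (uu k a b ⊗ₜ[k] (1 : H)), h4, ← inner1 h]
    rw [Finset.mul_sum, Finset.sum_mul]
    refine Finset.sum_congr rfl fun i _ => ?_
    have h5 : (antipode k (b i) ⊗ₜ[k] antipode k (b j)) =
      ((1 : H) ⊗ₜ[k] antipode k (b j)) * (antipode k (b i) ⊗ₜ[k] 1) := by simp
    rw [h5, Bialgebra.comul_mul, hQ]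
    simp only [mul_assoc]
    rw [← mul_assoc (RR k a b) (comul (R := k) (a i)), ← q3' h]
    simp only [mul_assoc]
  simp only [h3]
  rw [← Finset.mul_sum, inner2 h]
  simp

/-- the anti-automorphism `(S ⊗ S) ∘ τ` -/
noncomputable def PT (k H : Type) [Field k] [Ring H] [HopfAlgebra k H] :
    H ⊗[k] H →ₗ[k] H ⊗[k] H :=
  TensorProduct.map (antipode k) (antipode k) ∘ₗ (TensorProduct.comm k H H).toLinearMap

theorem PT_tmul (x y : H) : PT k H (x ⊗ₜ y) = antipode k y ⊗ₜ antipode k x := by simp [PT]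

theorem PT_mul (X Y : H ⊗[k] H) : PT k H (X * Y) = PT k H Y * PT k H X := by
  induction X with
  | zero => simp
  | add x y hx hy => simp [add_mul, mul_add, hx, hy]
  | tmul x y =>
    induction Y with
    | zero => simp
    | add x y hx hy => simp [add_mul, mul_add, hx, hy]
    | tmul z w => simp [PT_tmul, antipode_mul_antidistrib]

theorem comul_v (h : QT k H D e a b) :
    comul (R := k) (vv k a b) * (RR k b a * RR k a b) = vv k a b ⊗ₜ[k] vv k a b := by
  have h1 := congrArg (PT k H) (comul_u h)
  have h2 : PT k H (RR k a b) = RR k b a := by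
    have := congrArg (TensorProduct.comm k H H) h.SSR
    simpa [RR, PT_tmul] using this
  have h3 : PT k H (RR k b a) = RR k a b := by
    have := h.SSR
    simpa [RR, PT_tmul] using this
  have h4 : PT k H (comul (R := k) (uu k a b)) = comul (R := k) (vv k a b) := by
    rw [vv, comul_antipode h.hD, h.hD, map_sum]
    simp only [PT_tmul]
  rw [PT_mul, PT_mul, h2, h3, h4, PT_tmul, ← Q_comm h] at h1
  exact h1

theorem g_grouplike (h : QT k H D e a b) : IsGroupLikeElem k (gg k a b) := by
  constructor
  · have h1 : counit (R := k) (vv k a b) * counit (R := k) (ww' k a b) = 1 := by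
      rw [← Bialgebra.counit_mul, vw h, Bialgebra.counit_one]
    rw [gg, Bialgebra.counit_mul, ← h1, vv, counit_antipode]
  · have h1 := comul_u h
    rw [← gv h, Bialgebra.comul_mul, mul_assoc, comul_v h] at h1
    have h2 := congrArg (· * (ww' k a b ⊗ₜ[k] ww' k a b)) h1
    simpa [mul_assoc, vw h, ← Algebra.TensorProduct.one_def] using h2

theorem g_pow (h : QT k H D e a b) [FiniteDimensional k H] : ∃ M : ℕ, 0 < M ∧ gg k a b ^ M = 1 := by
  have hfin : {x : H | IsGroupLikeElem k x}.Finite :=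
    (linearIndepOn_isGroupLikeElem (R := k) (A := H)).setFinite
  obtain ⟨m, n, hmn, hEq⟩ := Set.Finite.exists_lt_map_eq_of_forall_mem
    (f := fun i : ℕ => gg k a b ^ i) (fun i => (g_grouplike h).pow) hfin
  refine ⟨n - m, by omega, ?_⟩
  have hu : IsUnit (gg k a b ^ m) :=
    IsUnit.pow _ ⟨⟨_, _, g_inv h, g_inv' h⟩, rfl⟩
  apply hu.mul_left_cancel
  rw [← pow_add, mul_one]
  rw [hEq]
  congr 1
  omega

theorem SS_pow (h : QT k H D e a b) [FiniteDimensional k H] : ∃ N : ℕ, 0 < N ∧ SS k H ^ N = 1 := by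
  obtain ⟨M, hM, hg⟩ := g_pow h
  refine ⟨2 * M, by omega, ?_⟩
  rw [pow_mul]
  have key : ∀ j : ℕ, ∀ x, ((SS k H ^ 2) ^ j) x = gg k a b ^ j * x * (vv k a b * ww k a b) ^ j := by
    intro j
    induction j with
    | zero => simp
    | succ j ih =>
      intro x
      rw [pow_succ', Module.End.mul_apply, ih, pow_two, Module.End.mul_apply, S4 h, pow_succ',
        pow_succ (vv k a b * ww k a b)]
      simp only [mul_assoc]
  have hinv : (vv k a b * ww k a b) ^ M = 1 := by
    have : (vv k a b * ww k a b) ^ M * gg k a b ^ M = 1 := by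
      have hc : Commute (vv k a b * ww k a b) (gg k a b) := by
        rw [Commute, SemiconjBy, g_inv h, g_inv' h]
      rw [← hc.mul_pow, g_inv' h, one_pow]
    rwa [hg, mul_one] at this
  ext x
  rw [key, hg, hinv]
  simp

end QT
end HS

namespace HS
open Module Coalgebra HopfAlgebra

section sub
variable {k H K : Type} [Field k] [Ring H] [HopfAlgebra k H] [Ring K] [Algebra k K]

theorem sub_J_inj (ι : K →ₐ[k] H) (hι : Function.Injective ι) :
    Function.Injective (Algebra.TensorProduct.map ι ι) :=
  TensorProduct.map_injective_of_flat_flat ι.toLinearMap ι.toLinearMap hι hι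

/-- bialgebra structure on a subalgebra closed under comultiplication -/
noncomputable abbrev subBialg (ι : K →ₐ[k] H) (hι : Function.Injective ι) (Δ : K →ₐ[k] K ⊗[k] K)
    (hΔ : ∀ x, Algebra.TensorProduct.map ι ι (Δ x) = comul (R := k) (ι x)) : Bialgebra k K :=
  Bialgebra.ofAlgHom Δ ((Bialgebra.counitAlgHom k H).comp ι)
    (by
      have hJ3 : Function.Injective (Algebra.TensorProduct.map ι (Algebra.TensorProduct.map ι ι)) :=
        TensorProduct.map_injective_of_flat_flat ι.toLinearMap
          (Algebra.TensorProduct.map ι ι).toLinearMap hι (sub_J_inj ι hι)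
      ext x
      apply hJ3
      have h1 : ∀ X : K ⊗[k] K, Algebra.TensorProduct.map ι (Algebra.TensorProduct.map ι ι)
          ((Algebra.TensorProduct.assoc k k k K K K)
            (Algebra.TensorProduct.map Δ (AlgHom.id k K) X)) =
          TensorProduct.assoc k H H H (LinearMap.rTensor H (comul (R := k))
            (Algebra.TensorProduct.map ι ι X)) := by
        intro X
        induction X with
        | zero => simp
        | add x y hx hy => simp only [map_add, hx, hy]
        | tmul x y =>
          simp only [Algebra.TensorProduct.map_tmul, LinearMap.rTensor_tmul, ← hΔ, AlgHom.id_apply]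
          induction Δ x with
          | zero => simp
          | add x y hx hy => simp only [map_add, add_tmul, hx, hy]
          | tmul z w => simp
      have h2 : ∀ X : K ⊗[k] K, Algebra.TensorProduct.map ι (Algebra.TensorProduct.map ι ι)
          (Algebra.TensorProduct.map (AlgHom.id k K) Δ X) =
          LinearMap.lTensor H (comul (R := k)) (Algebra.TensorProduct.map ι ι X) := by
        intro X
        induction X with
        | zero => simp
        | add x y hx hy => simp only [map_add, hx, hy]
        | tmul x y =>
          simp only [Algebra.TensorProduct.map_tmul, LinearMap.lTensor_tmul, ← hΔ, AlgHom.id_apply]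
      refine (h1 (Δ x)).trans (Eq.trans ?_ (h2 (Δ x)).symm)
      rw [hΔ, coassoc_apply])
    (by
      ext x
      have h1 : ∀ X : K ⊗[k] K, ι (TensorProduct.lid k K (Algebra.TensorProduct.map
          ((Bialgebra.counitAlgHom k H).comp ι) (AlgHom.id k K) X)) =
          TensorProduct.lid k H (LinearMap.rTensor H (counit (R := k))
            (Algebra.TensorProduct.map ι ι X)) := by
        intro X
        induction X with
        | zero => simp
        | add x y hx hy => simp only [map_add, hx, hy]
        | tmul x y => simp
      apply (TensorProduct.lid k K).injective
      apply hι
      refine (h1 (Δ x)).trans ?_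
      rw [hΔ, rTensor_counit_comul]
      simp)
    (by
      ext x
      have h1 : ∀ X : K ⊗[k] K, ι (TensorProduct.rid k K (Algebra.TensorProduct.map
          (AlgHom.id k K) ((Bialgebra.counitAlgHom k H).comp ι) X)) =
          TensorProduct.rid k H (LinearMap.lTensor H (counit (R := k))
            (Algebra.TensorProduct.map ι ι X)) := by
        intro X
        induction X with
        | zero => simp
        | add x y hx hy => simp only [map_add, hx, hy]
        | tmul x y => simp
      apply (TensorProduct.rid k K).injective
      apply hι
      refine (h1 (Δ x)).trans ?_
      rw [hΔ, lTensor_counit_comul]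
      simp)

/-- Hopf algebra structure on a sub-Hopf algebra -/
noncomputable abbrev subHopf (ι : K →ₐ[k] H) (hι : Function.Injective ι) (Δ : K →ₐ[k] K ⊗[k] K)
    (hΔ : ∀ x, Algebra.TensorProduct.map ι ι (Δ x) = comul (R := k) (ι x))
    (S : K →ₗ[k] K) (hS : ∀ x, ι (S x) = antipode k (ι x)) : HopfAlgebra k K :=
  { subBialg ι hι Δ hΔ with
    antipode := S
    mul_antipode_rTensor_comul := by
      ext x
      have h1 : ∀ X : K ⊗[k] K, ι (LinearMap.mul' k K (LinearMap.rTensor K S X)) =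
          LinearMap.mul' k H (LinearMap.rTensor H (antipode k)
            (Algebra.TensorProduct.map ι ι X)) := by
        intro X
        induction X with
        | zero => simp
        | add x y hx hy => simp only [map_add, hx, hy]
        | tmul x y => simp [hS]
      apply hι
      refine (h1 (Δ x)).trans ?_
      rw [hΔ, mul_antipode_rTensor_comul_apply]
      exact (ι.commutes _).symm
    mul_antipode_lTensor_comul := by
      ext x
      have h1 : ∀ X : K ⊗[k] K, ι (LinearMap.mul' k K (LinearMap.lTensor K S X)) =
          LinearMap.mul' k H (LinearMap.lTensor H (antipode k)
            (Algebra.TensorProduct.map ι ι X)) := by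
        intro X
        induction X with
        | zero => simp
        | add x y hx hy => simp only [map_add, hx, hy]
        | tmul x y => simp [hS]
      apply hι
      refine (h1 (Δ x)).trans ?_
      rw [hΔ, mul_antipode_lTensor_comul_apply]
      exact (ι.commutes _).symm }

end sub

section sub2
variable {k H : Type} [Field k] [Ring H] [HopfAlgebra k H]

theorem exists_subDelta (K : Subalgebra k H)
    (hK : ∀ x ∈ K, comul (R := k) x ∈ (Algebra.TensorProduct.map K.val K.val).range) :
    ∃ Δ : K →ₐ[k] K ⊗[k] K, ∀ x, Algebra.TensorProduct.map K.val K.val (Δ x) =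
      comul (R := k) (K.val x) := by
  have hi := sub_J_inj K.val Subtype.val_injective
  let E := AlgEquiv.ofInjective (Algebra.TensorProduct.map K.val K.val) hi
  refine ⟨(E.symm : _ →ₐ[k] _).comp
    (AlgHom.codRestrict ((Bialgebra.comulAlgHom k H).comp K.val) _ (fun x => hK x x.2)), fun x => ?_⟩
  have := E.apply_symm_apply (AlgHom.codRestrict ((Bialgebra.comulAlgHom k H).comp K.val) _
    (fun x => hK x x.2) x)
  exact congrArg Subtype.val this

/-- consequences of the theory for Hopf subalgebras -/
theorem sub_facts [IsAlgClosed k] [CharZero k] [FiniteDimensional k H] (K : Subalgebra k H)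
    (hK : ∀ x ∈ K, comul (R := k) x ∈ (Algebra.TensorProduct.map K.val K.val).range)
    (hS : ∀ x ∈ K, antipode k x ∈ K) (N : ℕ) (hN0 : 0 < N) (hN : SS k H ^ N = 1) :
    IsSemisimpleRing K ↔ ∀ x ∈ K, antipode k (antipode k x) = x := by
  obtain ⟨Δ, hΔ⟩ := exists_subDelta K hK
  let S : K →ₗ[k] K :=
    { toFun := fun x => ⟨antipode k (x : H), hS x x.2⟩
      map_add' := fun x y => Subtype.ext (by simp)
      map_smul' := fun c x => Subtype.ext (by simp) }
  have hS' : ∀ x, K.val (S x) = antipode k (K.val x) := fun x => rfl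
  letI : HopfAlgebra k K := subHopf K.val Subtype.val_injective Δ hΔ S hS'
  haveI : FiniteDimensional k K := inferInstanceAs (FiniteDimensional k (Subalgebra.toSubmodule K))
  haveI : NeZero N := ⟨hN0.ne'⟩
  have hSS : ∀ x : K, ((SS k K x : K) : H) = SS k H x := fun x => rfl
  have hSSn : ∀ (n : ℕ) (x : K), (((SS k K ^ n) x : K) : H) = (SS k H ^ n) x := by
    intro n
    induction n with
    | zero => intro x; simp
    | succ n ih =>
      intro x
      rw [pow_succ, pow_succ, Module.End.mul_apply, Module.End.mul_apply, ih, hSS]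
  constructor
  · intro hss x hx
    have h1 : SS k K ^ N = 1 := by
      ext x
      rw [hSSn, hN]; rfl
    have h2 := T2 (k := k) (H := K) N h1
    have h3 := hSS ⟨x, hx⟩
    rw [h2] at h3
    exact h3.symm
  · intro h
    have h2 : (antipode k ∘ₗ antipode k : K →ₗ[k] K) = LinearMap.id := by
      ext x
      exact h x x.2
    apply T1 (k := k) (H := K)
    rw [h2, LinearMap.trace_id]
    haveI : Nontrivial K := by
      haveI : Nontrivial H := by
        refine ⟨1, 0, fun h => ?_⟩
        have := congrArg (counit (R := k)) h
        simp at this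
      infer_instance
    exact_mod_cast Module.finrank_pos.ne'

end sub2
end HS

namespace HS
open Module Coalgebra HopfAlgebra
namespace QT
variable {k H : Type} [Field k] [Ring H] [HopfAlgebra k H] {n r : ℕ}
    {D : Fin n → H →ₗ[k] H} {e : Fin n → H} {a b : Fin r → H}

theorem chi_comm (x y : H) : chi k H (x * y) = chi k H (y * x) := by
  rw [chi_apply, chi_apply, LinearMap.mulLeft_mul, LinearMap.mulLeft_mul]
  exact LinearMap.trace_mul_comm k _ _

theorem chi_d (h : QT k H D e a b) (x : H) (hx : ∀ i, Commute x (antipode k (b i))) :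
    chi k H ((uu k a b - vv k a b) * x) = 0 := by
  rw [sub_mul, map_sub, vv_eq h, uu, Finset.sum_mul, Finset.sum_mul, map_sum, map_sum, sub_eq_zero]
  refine Finset.sum_congr rfl fun i _ => ?_
  rw [mul_assoc, chi_comm, mul_assoc, mul_assoc, (hx i).eq]

theorem g_eq_one (h : QT k H D e a b) [FiniteDimensional k H] [IsAlgClosed k] [CharZero k]
    (hb : ∀ i, antipode k (antipode k (b i)) = b i) : gg k a b = 1 := by
  have hcu : ∀ i, Commute (uu k a b) (antipode k (b i)) := by
    intro i
    have := S2u h (antipode k (b i))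
    rw [hb] at this
    exact this.symm
  have hcv : ∀ i, Commute (vv k a b) (antipode k (b i)) := by
    intro i
    have := vS2 h (antipode k (b i))
    rwa [hb] at this
  have hcw : ∀ i, Commute (ww' k a b) (antipode k (b i)) := by
    intro i
    have h1 := (hcv i).eq
    rw [Commute, SemiconjBy]
    calc ww' k a b * antipode k (b i)
        = ww' k a b * (antipode k (b i) * vv k a b) * ww' k a b := by
          rw [mul_assoc, mul_assoc, vw h, mul_one]
      _ = antipode k (b i) * ww' k a b := by
          rw [← h1, ← mul_assoc (ww' k a b), wv h, one_mul]
  have hcg : ∀ i, Commute (gg k a b) (antipode k (b i)) := fun i => (hcu i).mul_left (hcw i)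
  have hstep : ∀ j : ℕ, chi k H (gg k a b ^ (j + 1)) = chi k H (gg k a b ^ j) := by
    intro j
    have h1 := chi_d h (ww' k a b * gg k a b ^ j) (fun i => (hcw i).mul_left ((hcg i).pow_left j))
    rw [← mul_assoc, sub_mul, vw h, sub_mul, one_mul, map_sub, sub_eq_zero] at h1
    rw [pow_succ']
    exact h1
  have hconst : ∀ j : ℕ, chi k H (gg k a b ^ j) = finrank k H := by
    intro j
    induction j with
    | zero => rw [pow_zero, chi_apply, LinearMap.mulLeft_one, LinearMap.trace_id]
    | succ j ih => rw [hstep, ih]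
  obtain ⟨M, hM, hg⟩ := g_pow h
  haveI : NeZero M := ⟨hM.ne'⟩
  haveI : NeZero (M : k) := ⟨by exact_mod_cast hM.ne'⟩
  obtain ⟨ζ, hζ⟩ := HasEnoughRootsOfUnity.exists_primitiveRoot k M
  let T : Module.End k H := LinearMap.mulLeft k (gg k a b)
  have hTp : ∀ j, T ^ j = LinearMap.mulLeft k (gg k a b ^ j) := by
    intro j
    simp [T, LinearMap.pow_mulLeft]
  have hT : T ^ M = 1 := by rw [hTp, hg]; ext; simp
  obtain ⟨m, hm1, hm2, -, hm4⟩ := eig_decomp T M hT ζ hζ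
  have hT1 : T = 1 := by
    apply hm4
    have h1 : ∑ j ∈ Finset.range M, LinearMap.trace k H (T ^ j) = M * finrank k H := by
      simp only [hTp, ← chi_apply, hconst]
      simp
    have h2 : ∀ i : Fin M, ∑ j ∈ Finset.range M, (ζ ^ (i : ℕ)) ^ j = if i = 0 then (M : k) else 0 := by
      intro i
      split_ifs with hi
      · simp [hi]
      · have hne : ζ ^ (i : ℕ) ≠ 1 := by
          apply hζ.pow_ne_one_of_pos_of_lt _ i.2
          intro h0
          exact hi (Fin.ext h0)
        have := mul_neg_geom_sum (ζ ^ (i : ℕ)) M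
        rw [pow_right_comm, hζ.pow_eq_one, one_pow, sub_self] at this
        exact (mul_eq_zero.1 this).resolve_left (sub_ne_zero.2 hne.symm)
    simp only [hm1] at h1
    rw [Finset.sum_comm] at h1
    simp only [← Finset.mul_sum, h2] at h1
    simp only [mul_ite, mul_zero, Finset.sum_ite_eq', Finset.mem_univ, if_true] at h1
    have h3 : (m 0 : k) = finrank k H := by
      have : (M : k) ≠ 0 := NeZero.ne _
      rw [mul_comm] at h1
      exact mul_left_cancel₀ this h1
    have h4 : m 0 = finrank k H := by exact_mod_cast h3
    intro i hi
    rw [← hm2] at h4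
    have h5 := Finset.add_sum_erase Finset.univ m (Finset.mem_univ 0)
    have h6 : ∑ x ∈ Finset.univ.erase 0, m x = 0 := by omega
    exact (Finset.sum_eq_zero_iff.1 h6) i (by simp [hi])
  have := congrArg (fun f : Module.End k H => f 1) hT1
  simpa [T] using this

theorem ss_of_b (h : QT k H D e a b) [FiniteDimensional k H] [IsAlgClosed k] [CharZero k]
    (hodd : Odd (finrank k H)) (hb : ∀ i, antipode k (antipode k (b i)) = b i) :
    IsSemisimpleRing H := by
  have hg := g_eq_one h hb
  have hg' : vv k a b * ww k a b = 1 := by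
    have := g_inv h
    rwa [hg, one_mul] at this
  have hT : SS k H ^ 2 = 1 := by
    ext x
    rw [pow_two, Module.End.mul_apply, S4 h, hg, hg']
    simp
  have hζ : IsPrimitiveRoot (-1 : k) 2 := IsPrimitiveRoot.neg_one 0 (by decide)
  obtain ⟨m, hm1, hm2, -, -⟩ := eig_decomp (SS k H) 2 hT (-1) hζ
  apply T1 (k := k)
  have h1 := hm1 1
  rw [pow_one] at h1
  change LinearMap.trace k H (SS k H) ≠ 0
  rw [h1]
  rw [Fin.sum_univ_two] at h1 ⊢
  rw [Fin.sum_univ_two] at hm2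
  simp only [Fin.val_zero, Fin.val_one, pow_zero, pow_one, mul_one, mul_neg, one_pow]
  intro h0
  have h2 : (m 0 : k) = m 1 := by linear_combination h0
  have h3 : m 0 = m 1 := by exact_mod_cast h2
  rw [← hm2, h3] at hodd
  exact (Nat.not_odd_iff_even.2 ⟨m 1, rfl⟩) hodd

end QT
end HS

namespace HS
open Module Coalgebra HopfAlgebra

theorem exists_basis_decomp (k H : Type) [Field k] [Ring H] [HopfAlgebra k H]
    [FiniteDimensional k H] (R : H ⊗[k] H) :
    ∃ (bs : Basis (Fin (finrank k H)) k H) (b : Fin (finrank k H) → H),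
      R = ∑ i, bs i ⊗ₜ[k] b i := by
  let b := Module.finBasis k H
  refine ⟨b, fun i => TensorProduct.lid k H ((LinearMap.rTensor H (b.coord i)) R), ?_⟩
  induction R with
  | zero => simp
  | tmul x y =>
    simp only [LinearMap.rTensor_tmul, TensorProduct.lid_tmul, ← TensorProduct.smul_tmul]
    rw [← TensorProduct.sum_tmul]
    congr 1
    exact (b.sum_repr x).symm
  | add x y hx hy =>
    conv_lhs => rw [hx, hy]
    simp [TensorProduct.tmul_add, Finset.sum_add_distrib]

namespace QT
variable {k H : Type} [Field k] [Ring H] [HopfAlgebra k H] {n r : ℕ}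
    {D : Fin n → H →ₗ[k] H} {e : Fin n → H} {b : Fin r → H}

theorem comul_b {bs : Basis (Fin r) k H} (h : QT k H D e bs b) (i : Fin r) :
    comul (R := k) (b i) = ∑ j, ∑ m, bs.coord i (bs j * bs m) • (b m ⊗ₜ[k] b j) := by
  have h1 := congrArg (tri (k := k) (fun x y z => bs.coord i x • (y ⊗ₜ[k] z))) h.q2
  simp only [map_sum, tri_tmul] at h1
  rw [← h1, h.hD]
  simp only [← Finset.smul_sum, Basis.coord_apply, Basis.repr_self, Finsupp.single_apply]
  simp

theorem antipode_b [FiniteDimensional k H] {bs : Basis (Fin r) k H} (h : QT k H D e bs b) :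
    ∃ c : Fin r → Fin r → k, ∀ i, antipode k (b i) = ∑ j, c i j • b j := by
  obtain ⟨G, hG⟩ := LinearMap.exists_leftInverse_of_injective (antipode k : H →ₗ[k] H)
    (LinearMap.ker_eq_bot.2 fun x y hxy => S_inj h x y hxy)
  refine ⟨fun i j => bs.coord i (G (bs j)), fun i => ?_⟩
  have h1 := congrArg (bi (k := k) (fun x y => bs.coord i (G x) • y)) h.SSR
  simp only [map_sum, bi_tmul] at h1
  rw [← h1]
  have hG' : ∀ x, G (antipode k x) = x := fun x => LinearMap.congr_fun hG x
  simp only [hG', Basis.coord_apply, Basis.repr_self, Finsupp.single_apply]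
  simp

theorem main [IsAlgClosed k] [CharZero k] [FiniteDimensional k H]
    (hodd : Odd (finrank k H)) {bs : Basis (Fin r) k H} (h : QT k H D e bs b)
    (s : Set H) (hs1 : ∀ i, b i ∈ s) (hs2 : ∀ y ∈ s, ∃ c : Fin r → k, y = ∑ i, c i • b i) :
    IsSemisimpleRing H ↔ IsSemisimpleRing (Algebra.adjoin k s) := by
  have hbK : ∀ i, b i ∈ Algebra.adjoin k s := fun i => Algebra.subset_adjoin (hs1 i)
  set K := Algebra.adjoin k s with hKdef
  have hle : K ≤ (Algebra.TensorProduct.map K.val K.val).range.comap (Bialgebra.comulAlgHom k H) := by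
    rw [hKdef]
    apply Algebra.adjoin_le
    rw [← hKdef]
    intro y hy
    obtain ⟨c, rfl⟩ := hs2 y hy
    apply sum_mem
    intro i _
    apply Subalgebra.smul_mem
    show comul (R := k) (b i) ∈ (Algebra.TensorProduct.map K.val K.val).range
    rw [comul_b h]
    refine sum_mem fun j _ => sum_mem fun m _ => Subalgebra.smul_mem _ ?_ _
    exact ⟨(⟨b m, hbK m⟩ : K) ⊗ₜ (⟨b j, hbK j⟩ : K), rfl⟩
  have hK : ∀ x ∈ K, comul (R := k) x ∈ (Algebra.TensorProduct.map K.val K.val).range :=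
    fun x hx => hle hx
  have hS : ∀ x ∈ K, antipode k x ∈ K := by
    obtain ⟨c, hc⟩ := antipode_b h
    intro x hx
    rw [hKdef] at hx
    induction hx using Algebra.adjoin_induction with
    | mem y hy =>
      obtain ⟨c', rfl⟩ := hs2 y hy
      rw [map_sum]
      refine sum_mem fun i _ => ?_
      rw [map_smul, hc]
      exact Subalgebra.smul_mem _ (sum_mem fun j _ => Subalgebra.smul_mem _ (hbK j) _) _
    | algebraMap t =>
      rw [Algebra.algebraMap_eq_smul_one, map_smul, antipode_one]
      exact Subalgebra.smul_mem _ (one_mem _) _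
    | add x y _ _ hx hy => rw [map_add]; exact add_mem hx hy
    | mul x y _ _ hx hy => rw [antipode_mul_antidistrib]; exact mul_mem hy hx
  obtain ⟨N, hN0, hN⟩ := SS_pow h
  have hfacts := sub_facts K hK hS N hN0 hN
  constructor
  · intro hss
    haveI : NeZero N := ⟨hN0.ne'⟩
    have h2 := T2 (k := k) (H := H) N hN
    rw [hfacts]
    intro x _
    exact LinearMap.congr_fun h2 x
  · intro hss
    exact ss_of_b h hodd fun i => hfacts.1 hss _ (hbK i)

end QT
end HS

/-- Let `(H, R)` be an odd-dimensional quasitriangular Hopf algebra over an algebraically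
closed field of characteristic 0 (i.e. `R ∈ H ⊗ H` is invertible with
`(Δ ⊗ id)(R) = R₁₃ R₂₃`, `(id ⊗ Δ)(R) = R₁₃ R₁₂`, and `Δᵒᵖ(h) R = R Δ(h)`). Then `H`
is semisimple iff the Hopf subalgebra `H_l = {(f ⊗ id)(R) : f ∈ H*}` is semisimple. -/
theorem stmt_13 (k : Type) [Field k] [IsAlgClosed k] [CharZero k]
    (H : Type) [Ring H] [HopfAlgebra k H] [FiniteDimensional k H]
    (hodd : Odd (Module.finrank k H))
    (R : H ⊗[k] H) (hRunit : IsUnit R)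
    (h1 : (TensorProduct.assoc k H H H)
        ((LinearMap.rTensor H (Coalgebra.comul (R := k) (A := H))) R)
      = (Algebra.TensorProduct.map (AlgHom.id k H)
          (Algebra.TensorProduct.includeRight (R := k) (A := H) (B := H))) R
        * (Algebra.TensorProduct.includeRight (R := k) (A := H) (B := H ⊗[k] H)) R)
    (h2 : (LinearMap.lTensor H (Coalgebra.comul (R := k) (A := H))) R
      = (Algebra.TensorProduct.map (AlgHom.id k H)
          (Algebra.TensorProduct.includeRight (R := k) (A := H) (B := H))) R
        * (Algebra.TensorProduct.map (AlgHom.id k H)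
          (Algebra.TensorProduct.includeLeft (R := k) (S := k) (A := H) (B := H))) R)
    (h3 : ∀ h : H, (TensorProduct.comm k H H) (Coalgebra.comul (R := k) h) * R
        = R * Coalgebra.comul (R := k) h) :
    IsSemisimpleRing H ↔
      IsSemisimpleRing (Algebra.adjoin k
        {y : H | ∃ f : Module.Dual k H, y = TensorProduct.lid k H ((LinearMap.rTensor H f) R)}) := by
  obtain ⟨n, D, e, hD⟩ := HS.exists_sweedler k H
  obtain ⟨bs, b, rfl⟩ := HS.exists_basis_decomp k H R
  have hq : HS.QT k H D e bs b := by
    refine ⟨hD, hRunit, ?_, ?_, fun h => ?_⟩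
    · simpa [hD, TensorProduct.sum_tmul, Finset.sum_mul_sum] using h1
    · simpa [hD, TensorProduct.tmul_sum, Finset.sum_mul_sum] using h2
    · have h4 := h3 h
      rw [hD, map_sum] at h4
      simp only [TensorProduct.comm_tmul, Finset.sum_mul_sum,
        Algebra.TensorProduct.tmul_mul_tmul] at h4
      rw [h4, Finset.sum_comm]
  refine HS.QT.main hodd hq _ (fun i => ⟨bs.coord i, ?_⟩) ?_
  · simp [Finsupp.single_apply]
  · rintro y ⟨f, rfl⟩
    exact ⟨fun i => f (bs i), by simp⟩
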